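/- arXiv:2006.13506 — 9 statements merged into one kernel-verified Lean document; each statement's English description precedes it below -/
import Mathlib

section
/- Let Λ ⊆ ℝ^q be a nonempty compact convex set, let μ > 0 and L₂₁ ≥ 0, and let F : ℝ^n × ℝ^q → ℝ be such that (i) for every θ ∈ ℝ^n the map α ↦ F(θ, α) is differentiable on ℝ^q and μ-strongly concave on Λ, and (ii) for all α ∈ Λ and all θ₁, θ₂ ∈ ℝ^n, ‖∇_α F(θ₁, α) − ∇_α F(θ₂, α)‖ ≤ L₂₁‖θ₁ − θ₂‖. Then for all θ₁, θ₂ ∈ ℝ^n and any points α₁, α₂ ∈ Λ such that α₁ maximizes F(θ₁, ·) over Λ and α₂ maximizes F(θ₂, ·) over Λ, one has ‖α₁ − α₂‖ ≤ (L₂₁/μ)‖θ₁ − θ₂‖. -/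
open RealInnerProductSpace

/-!
Write `f = F θ₁`, `g = F θ₂`, with maximizers `x = α₁`, `y = α₂`. Adding the strong concavity
inequality of `f` at `(x, y)` to the one at `(y, x)` gives `μ ‖x - y‖² ≤ (f' y - f' x) (x - y)`.
By the first-order optimality conditions `f' x (y - x) ≤ 0` and `g' y (x - y) ≤ 0`, the right-hand
side is at most
`(f' y - g' y) (x - y) ≤ ‖f' y - g' y‖ ‖x - y‖`; it remains to cancel `‖x - y‖` and apply the
Lipschitz bound at `y`. Reading gradients as functionals, this makes sense in any normed space.
-/

section

variable {E : Type*} [NormedAddCommGroup E] [NormedSpace ℝ E] {s : Set E} {μ : ℝ}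
  {f g : E → ℝ} {f' : E → StrongDual ℝ E} {φ : StrongDual ℝ E} {x y : E}

theorem apply_sub_nonpos_of_isLocalMaxOn (hmax : IsLocalMaxOn f s x)
    (hφ : HasFDerivWithinAt f φ s x) (hseg : segment ℝ x y ⊆ s) : φ (y - x) ≤ 0 :=
  hmax.hasFDerivWithinAt_nonpos hφ (sub_mem_posTangentConeAt_of_segment_subset hseg)

/-- The first-order form of `μ`-strong concavity of `f` on `s`: the graph of `f` lies below each
tangent at a point of `s` by at least a quadratic gap. The field of functionals `f'` stands for the
derivative of `f`; it is a separate argument so that derivatives within `s` are allowed, which need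
not be unique. -/
def FirstOrderStrongConcaveOn (s : Set E) (μ : ℝ) (f : E → ℝ) (f' : E → StrongDual ℝ E) : Prop :=
  ∀ x ∈ s, ∀ y ∈ s, f y ≤ f x + f' x (y - x) - μ / 2 * ‖y - x‖ ^ 2

namespace FirstOrderStrongConcaveOn

theorem mul_norm_sub_sq_le (hf : FirstOrderStrongConcaveOn s μ f f') (hx : x ∈ s) (hy : y ∈ s) :
    μ * ‖x - y‖ ^ 2 ≤ (f' y - f' x) (x - y) := by
  have hxy : f y ≤ f x - f' x (x - y) - μ / 2 * ‖x - y‖ ^ 2 := by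
    simpa only [← neg_sub x y, map_neg, norm_neg, ← sub_eq_add_neg] using hf x hx y hy
  have hyx : f x ≤ f y + f' y (x - y) - μ / 2 * ‖x - y‖ ^ 2 := hf y hy x hx
  rw [sub_apply]
  linarith

theorem mul_norm_sub_le_norm_sub_of_nonpos (hf : FirstOrderStrongConcaveOn s μ f f') (hx : x ∈ s)
    (hy : y ∈ s) (hfx : f' x (y - x) ≤ 0) (hφ : φ (x - y) ≤ 0) :
    μ * ‖x - y‖ ≤ ‖f' y - φ‖ := by
  obtain hzero | hpos := (norm_nonneg (x - y)).eq_or_lt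
  · simp only [← hzero, mul_zero, norm_nonneg]
  · refine le_of_mul_le_mul_right ?_ hpos
    rw [← neg_sub x y, map_neg] at hfx
    calc μ * ‖x - y‖ * ‖x - y‖ = μ * ‖x - y‖ ^ 2 := by ring
      _ ≤ (f' y - f' x) (x - y) := hf.mul_norm_sub_sq_le hx hy
      _ ≤ (f' y - φ) (x - y) := by
        simp only [sub_apply]
        linarith
      _ ≤ ‖f' y - φ‖ * ‖x - y‖ := (le_abs_self _).trans ((f' y - φ).le_opNorm _)

theorem mul_norm_sub_le_norm_sub_of_isMaxOn (hf : FirstOrderStrongConcaveOn s μ f f')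
    (hs : Convex ℝ s) (hx : x ∈ s) (hy : y ∈ s) (hf' : HasFDerivWithinAt f (f' x) s x)
    (hg' : HasFDerivWithinAt g φ s y) (hfmax : IsMaxOn f s x) (hgmax : IsMaxOn g s y) :
    μ * ‖x - y‖ ≤ ‖f' y - φ‖ :=
  hf.mul_norm_sub_le_norm_sub_of_nonpos hx hy
    (apply_sub_nonpos_of_isLocalMaxOn hfmax.localize hf' (hs.segment_subset hx hy))
    (apply_sub_nonpos_of_isLocalMaxOn hgmax.localize hg' (hs.segment_subset hy hx))

end FirstOrderStrongConcaveOn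

theorem stmt0_general {Θ : Type*} [PseudoMetricSpace Θ] (hs : Convex ℝ s) (hμ : 0 < μ) {L : ℝ}
    {F : Θ → E → ℝ} {F' : Θ → E → StrongDual ℝ E}
    (hF' : ∀ θ, ∀ x ∈ s, HasFDerivWithinAt (F θ) (F' θ x) s x)
    (hF : ∀ θ, FirstOrderStrongConcaveOn s μ (F θ) (F' θ))
    (hlip : ∀ x ∈ s, ∀ θ₁ θ₂, ‖F' θ₁ x - F' θ₂ x‖ ≤ L * dist θ₁ θ₂)
    {θ₁ θ₂ : Θ} (hx : x ∈ s) (hy : y ∈ s) (hxmax : IsMaxOn (F θ₁) s x)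
    (hymax : IsMaxOn (F θ₂) s y) : ‖x - y‖ ≤ L / μ * dist θ₁ θ₂ := by
  rw [div_mul_eq_mul_div, le_div_iff₀' hμ]
  calc μ * ‖x - y‖ ≤ ‖F' θ₁ y - F' θ₂ y‖ :=
        (hF θ₁).mul_norm_sub_le_norm_sub_of_isMaxOn hs hx hy (hF' θ₁ x hx) (hF' θ₂ y hy)
          hxmax hymax
    _ ≤ L * dist θ₁ θ₂ := hlip y hy θ₁ θ₂

end

/-- Lipschitz continuity of the maximizer of a strongly concave
function whose gradient in `α` is Lipschitz in `θ`. -/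
theorem stmt0 {n q : ℕ} (Λ : Set (EuclideanSpace ℝ (Fin q)))
    (hΛne : Λ.Nonempty) (hΛcompact : IsCompact Λ) (hΛconvex : Convex ℝ Λ)
    (μ L21 : ℝ) (hμ : 0 < μ) (hL21 : 0 ≤ L21)
    (F : EuclideanSpace ℝ (Fin n) → EuclideanSpace ℝ (Fin q) → ℝ)
    (hdiff : ∀ θ, Differentiable ℝ (F θ))
    (hconcave : ∀ θ, ∀ x ∈ Λ, ∀ y ∈ Λ,
      F θ y ≤ F θ x + ⟪gradient (F θ) x, y - x⟫ - (μ / 2) * ‖y - x‖ ^ 2)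
    (hlip : ∀ α ∈ Λ, ∀ θ₁ θ₂ : EuclideanSpace ℝ (Fin n),
      ‖gradient (F θ₁) α - gradient (F θ₂) α‖ ≤ L21 * ‖θ₁ - θ₂‖) :
    ∀ (θ₁ θ₂ : EuclideanSpace ℝ (Fin n)) (α₁ α₂ : EuclideanSpace ℝ (Fin q)),
      α₁ ∈ Λ → α₂ ∈ Λ →
      (∀ α ∈ Λ, F θ₁ α ≤ F θ₁ α₁) →
      (∀ α ∈ Λ, F θ₂ α ≤ F θ₂ α₂) →
      ‖α₁ - α₂‖ ≤ (L21 / μ) * ‖θ₁ - θ₂‖ := by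
  intro θ₁ θ₂ α₁ α₂ hα₁ hα₂ hmax₁ hmax₂
  rw [← dist_eq_norm θ₁ θ₂]
  exact stmt0_general (F' := fun θ α ↦ InnerProductSpace.toDual ℝ _ (gradient (F θ) α)) hΛconvex hμ
    (fun θ α _ ↦ (hdiff θ α).hasGradientAt.hasFDerivAt.hasFDerivWithinAt) hconcave
    (by simpa only [← map_sub, LinearIsometryEquiv.norm_map, dist_eq_norm] using hlip)
    hα₁ hα₂ hmax₁ hmax₂
end

section
/- Let Λ ⊆ ℝ^q be a nonempty compact convex set, μ > 0, and L₁₁, L₁₂, L₂₁ ≥ 0. Let F : ℝ^n × ℝ^q → ℝ be such that (i) for every θ the map α ↦ F(θ, α) is differentiable on ℝ^q and μ-strongly concave on Λ; (ii) for every α the map θ ↦ F(θ, α) is differentiable with gradient ∇_θ F(θ, α), and ‖∇_θ F(θ₁, α₁) − ∇_θ F(θ₂, α₂)‖ ≤ L₁₁‖θ₁ − θ₂‖ + L₁₂‖α₁ − α₂‖ for all θ₁, θ₂, α₁, α₂; (iii) ‖∇_α F(θ₁, α) − ∇_α F(θ₂, α)‖ ≤ L₂₁‖θ₁ − θ₂‖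 for all θ₁, θ₂ and all α ∈ Λ. Then for every θ ∈ ℝ^n the function F(θ, ·) attains a unique maximizer α*(θ) over Λ, and the function g(θ) := sup_{α ∈ Λ} F(θ, α) is differentiable at every θ ∈ ℝ^n with gradient ∇g(θ) = ∇_θ F(θ, α*(θ)). -/
open RealInnerProductSpace

/-
Let `a` maximize `F θ` over `Λ`. Strong concavity gives the quadratic growth
`F θ α ≤ F θ a - (μ / 2) ‖α - a‖ ^ 2` on `Λ`, while the Lipschitz bound on the partial derivative
`F'` in `θ` gives
`F θ' α ≤ F θ α + F' θ a (θ' - θ) + (L₁₁ ‖θ' - θ‖ + L₁₂ ‖α - a‖) ‖θ' - θ‖`.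
By AM-GM the growth term absorbs the cross term `L₁₂ ‖α - a‖ ‖θ' - θ‖` at the cost of
`L₁₂ ^ 2 / (2 μ) ‖θ' - θ‖ ^ 2`, so `F θ' α ≤ F θ a + F' θ a (θ' - θ) + O(‖θ' - θ‖ ^ 2)` uniformly in
`α ∈ Λ`. The choice `α = a` bounds the supremum from below with an error of the same order, so the
maximizers at `θ' ≠ θ` never have to be compared with `a`.
-/

open Filter Set Topology

section UniformConcave

variable {E : Type*} [NormedAddCommGroup E] [NormedSpace ℝ E] {s : Set E} {f : E → ℝ}

theorem strongConcaveOn_of_le_add_sub_sq {m : ℝ} (hs : Convex ℝ s) (G : E → E →ₗ[ℝ] ℝ)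
    (h : ∀ x ∈ s, ∀ y ∈ s, f y ≤ f x + G x (y - x) - m / 2 * ‖y - x‖ ^ 2) :
    StrongConcaveOn s m f := by
  refine ⟨hs, fun x hx y hy a b ha hb hab => ?_⟩
  have hz : a • x + b • y ∈ s := hs hx hy ha hb hab
  obtain rfl : a = 1 - b := by linarith
  have hxz : x - ((1 - b) • x + b • y) = b • (x - y) := by module
  have hyz : y - ((1 - b) • x + b • y) = -((1 - b) • (x - y)) := by module
  have hx_le := h _ hz x hx
  have hy_le := h _ hz y hy
  rw [hxz, map_smul, norm_smul, Real.norm_of_nonneg hb] at hx_le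
  rw [hyz, map_neg, map_smul, norm_neg, norm_smul, Real.norm_of_nonneg ha] at hy_le
  simp only [smul_eq_mul] at hx_le hy_le ⊢
  linarith [mul_le_mul_of_nonneg_left hx_le ha, mul_le_mul_of_nonneg_left hy_le hb]

theorem le_sub_of_uniformConcaveOn_of_isMaxOn {φ : ℝ → ℝ} {a x : E} (hf : UniformConcaveOn s φ f)
    (ha : a ∈ s) (hmax : IsMaxOn f s a) (hx : x ∈ s) : f x ≤ f a - φ ‖x - a‖ := by
  have bound_along_segment : ∀ t ∈ Ioo (0 : ℝ) 1, f x ≤ f a - (1 - t) * φ ‖x - a‖ := by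
    rintro t ⟨ht₀, ht₁⟩
    have ht₁' : 0 ≤ 1 - t := by linarith
    have hconc := hf.2 hx ha ht₀.le ht₁' (add_sub_cancel t 1)
    have hle := hconc.trans (hmax (hf.1 hx ha ht₀.le ht₁' (add_sub_cancel t 1)))
    simp only [smul_eq_mul] at hle
    refine le_of_mul_le_mul_left ?_ ht₀
    linarith
  have hlim : Tendsto (fun t : ℝ => f a - (1 - t) * φ ‖x - a‖) (𝓝[>] 0) (𝓝 (f a - φ ‖x - a‖)) :=
    (Continuous.tendsto' (by fun_prop) 0 _ (by simp)).mono_left nhdsWithin_le_nhds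
  exact ge_of_tendsto hlim (eventually_of_mem (Ioo_mem_nhdsGT one_pos) bound_along_segment)

theorem modulus_div_four_le_of_uniformConcaveOn {φ : ℝ → ℝ} {M : ℝ} {x y : E}
    (hf : UniformConcaveOn s φ f) (hM : ∀ z ∈ s, f z ≤ M) (hx : x ∈ s) (hy : y ∈ s) :
    φ ‖x - y‖ / 4 ≤ M - (f x + f y) / 2 := by
  have half_nonneg : (0 : ℝ) ≤ 1 / 2 := by norm_num
  have hle := (hf.2 hx hy half_nonneg half_nonneg (add_halves 1)).trans
    (hM _ (hf.1 hx hy half_nonneg half_nonneg (add_halves 1)))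
  simp only [smul_eq_mul] at hle
  linarith

theorem le_add_sub_sq_of_strongConcaveOn_of_le_on_ball {m δ C : ℝ} {x y : E} (hm : 0 ≤ m)
    (hf : StrongConcaveOn s m f) (hδ : 0 < δ) (hx : x ∈ s) (hC : ∀ z ∈ s ∩ Metric.ball x δ, f z ≤ C)
    (hy : y ∈ s) (hxy : δ ≤ ‖y - x‖) :
    f y ≤ f x + 2 * ‖y - x‖ * δ⁻¹ * (C - f x) - m / 4 * ‖y - x‖ ^ 2 := by
  set r := ‖y - x‖
  have hr : 0 < r := hδ.trans_le hxy
  -- With this `t`, the point `t • y + (1 - t) • x` lies at distance `δ / 2` from `x`.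
  set t := δ / (2 * r) with ht
  have ht₀ : 0 < t := by positivity
  have htr : t * r = δ / 2 := by rw [ht]; field_simp
  have hinv : t * (2 * r * δ⁻¹) = 1 := by rw [ht]; field_simp
  have ht_half : t ≤ 1 / 2 := by
    rw [ht, div_le_div_iff₀ (by positivity) two_pos]
    linarith
  have ht₁ : 0 ≤ 1 - t := by linarith
  have hz : t • y + (1 - t) • x ∈ s := hf.1 hy hx ht₀.le ht₁ (add_sub_cancel t 1)
  have hz_ball : t • y + (1 - t) • x ∈ Metric.ball x δ := by
    have hzx : t • y + (1 - t) • x - x = t • (y - x) := by module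
    rw [mem_ball_iff_norm, hzx, norm_smul, Real.norm_of_nonneg ht₀.le, htr]
    exact half_lt_self hδ
  have hconc : t * f y + (1 - t) * f x + t * (1 - t) * (m / 2 * r ^ 2) ≤ C :=
    (hf.2 hy hx ht₀.le ht₁ (add_sub_cancel t 1)).trans (hC _ ⟨hz, hz_ball⟩)
  have hcoeff : t * (1 / 2) * (m / 2 * r ^ 2) ≤ t * (1 - t) * (m / 2 * r ^ 2) := by
    gcongr
    linarith
  refine le_of_mul_le_mul_left ?_ ht₀
  calc t * f y ≤ t * f x + (C - f x) - t * (m / 4 * r ^ 2) := by linarith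
    _ = t * f x + t * (2 * r * δ⁻¹) * (C - f x) - t * (m / 4 * r ^ 2) := by rw [hinv, one_mul]
    _ = t * (f x + 2 * r * δ⁻¹ * (C - f x) - m / 4 * r ^ 2) := by ring

theorem bddAbove_image_of_strongConcaveOn {m : ℝ} (hm : 0 < m) (hf : StrongConcaveOn s m f)
    (husc : UpperSemicontinuousOn f s) : BddAbove (f '' s) := by
  obtain rfl | ⟨x, hx⟩ := s.eq_empty_or_nonempty
  · simp only [image_empty, bddAbove_empty]
  obtain ⟨δ, hδ, hball⟩ := Metric.mem_nhdsWithin_iff.1 (husc x hx (f x + 1) (lt_add_one _))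
  have hnear : ∀ z ∈ s ∩ Metric.ball x δ, f z ≤ f x + 1 := fun z hz => (hball hz.symm).le
  refine ⟨f x + 1 + (m / 4)⁻¹ * δ⁻¹ ^ 2, forall_mem_image.2 fun y hy => ?_⟩
  obtain hlt | hge := lt_or_ge ‖y - x‖ δ
  · exact le_add_of_le_of_nonneg (hnear y ⟨hy, mem_ball_iff_norm.2 hlt⟩) (by positivity)
  · have hfar := le_add_sub_sq_of_strongConcaveOn_of_le_on_ball hm.le hf hδ hx hnear hy hge
    have amgm : 2 * ‖y - x‖ * δ⁻¹ ≤ m / 4 * ‖y - x‖ ^ 2 + (m / 4)⁻¹ * δ⁻¹ ^ 2 :=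
      two_mul_le_add_mul_sq (by positivity)
    linarith

theorem exists_isMaxOn_of_strongConcaveOn {m : ℝ} (hm : 0 < m) (hs : IsComplete s)
    (hne : s.Nonempty) (hf : StrongConcaveOn s m f) (husc : UpperSemicontinuousOn f s) :
    ∃ a ∈ s, IsMaxOn f s a := by
  have hbdd : BddAbove (f '' s) := bddAbove_image_of_strongConcaveOn hm hf husc
  set M := sSup (f '' s)
  have hM : ∀ x ∈ s, f x ≤ M := fun x hx => le_csSup hbdd (mem_image_of_mem f hx)
  -- The filter of maximizing points is Cauchy, and its limit is a maximizer.
  set l := comap f (𝓝 M) ⊓ 𝓟 s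
  have hl_tendsto : Tendsto f l (𝓝 M) := tendsto_comap.mono_left inf_le_left
  have hl_mem : s ∈ l := mem_inf_of_right (mem_principal_self s)
  have hl_neBot : l.NeBot := by
    have hM_closure : M ∈ closure (f '' s) := csSup_mem_closure (hne.image f) hbdd
    rw [mem_closure_iff_clusterPt, ClusterPt, ← map_principal] at hM_closure
    rw [← map_neBot_iff f, Filter.push_pull']
    exact hM_closure
  have hl_cauchy : Cauchy l := by
    refine Metric.cauchy_iff.2 ⟨hl_neBot, fun ε hε => ?_⟩
    have hη : M - m / 8 * ε ^ 2 < M := sub_lt_self M (by positivity)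
    refine ⟨_, inter_mem (hl_tendsto.eventually_const_lt hη) hl_mem, ?_⟩
    rintro x ⟨hx_gt : _ < f x, hx⟩ y ⟨hy_gt : _ < f y, hy⟩
    have hmid := modulus_div_four_le_of_uniformConcaveOn hf hM hx hy
    rw [dist_eq_norm]
    refine lt_of_pow_lt_pow_left₀ 2 hε.le (lt_of_mul_lt_mul_left ?_ hm.le)
    linarith
  obtain ⟨a, ha, hla⟩ := hs l hl_cauchy (le_principal_iff.2 hl_mem)
  have hMa : M ≤ f a := by
    by_contra! hlt
    obtain ⟨c, hac, hcM⟩ := exists_between hlt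
    have hlt_c : ∀ᶠ x in l, f x < c := (le_inf hla inf_le_right) (husc a ha c hac)
    obtain ⟨x, hxc, hcx⟩ := (hlt_c.and (hl_tendsto.eventually_const_lt hcM)).exists
    exact lt_asymm hxc hcx
  exact ⟨a, ha, fun x hx => (hM x hx).trans hMa⟩

end UniformConcave

section Envelope

variable {E : Type*} [NormedAddCommGroup E] [NormedSpace ℝ E] {θ : E}

theorem hasFDerivAt_of_norm_sub_sub_le_mul_sq {G : Type*} [NormedAddCommGroup G] [NormedSpace ℝ G]
    {g : E → G} {g' : E →L[ℝ] G} {C : ℝ}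
    (h : ∀ x, ‖g x - g θ - g' (x - θ)‖ ≤ C * ‖x - θ‖ ^ 2) : HasFDerivAt g g' θ := by
  have hO : (fun x => g x - g θ - g' (x - θ)) =O[𝓝 θ] fun x => ‖x - θ‖ ^ 2 :=
    .of_bound C (.of_forall fun x => by simpa only [norm_pow, norm_norm] using h x)
  exact .of_isLittleO (hO.trans_isLittleO (Asymptotics.isLittleO_pow_sub_sub θ one_lt_two))

theorem norm_image_sub_sub_le_of_norm_hasFDerivAt_sub_le {G : Type*} [NormedAddCommGroup G]
    [NormedSpace ℝ G] {f : E → G} {f' : E → E →L[ℝ] G} {φ : E →L[ℝ] G} {L K : ℝ} (hL : 0 ≤ L)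
    (hf : ∀ x, HasFDerivAt f (f' x) x) (hbound : ∀ x, ‖f' x - φ‖ ≤ L * ‖x - θ‖ + K) (x : E) :
    ‖f x - f θ - φ (x - θ)‖ ≤ (L * ‖x - θ‖ + K) * ‖x - θ‖ := by
  have hball : ∀ z ∈ Metric.closedBall θ ‖x - θ‖, ‖f' z - φ‖ ≤ L * ‖x - θ‖ + K := fun z hz =>
    (hbound z).trans (by gcongr; exact mem_closedBall_iff_norm.1 hz)
  exact (convex_closedBall θ ‖x - θ‖).norm_image_sub_le_of_norm_hasFDerivWithin_le'
    (fun z _ => (hf z).hasFDerivWithinAt) hball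
    (Metric.mem_closedBall_self (norm_nonneg _)) (mem_closedBall_iff_norm.2 le_rfl)

theorem le_add_mul_sq_of_le_sub_mul_sq {f : E → ℝ} {f' : E → E →L[ℝ] ℝ} {φ : E →L[ℝ] ℝ}
    {c d v L K : ℝ} (hc : 0 < c) (hL : 0 ≤ L) (hθ : f θ ≤ v - c * d ^ 2)
    (hf : ∀ x, HasFDerivAt f (f' x) x) (hbound : ∀ x, ‖f' x - φ‖ ≤ L * ‖x - θ‖ + K * d) (x : E) :
    f x ≤ v + φ (x - θ) + (L + K ^ 2 / (4 * c)) * ‖x - θ‖ ^ 2 := by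
  have htaylor : f x - f θ - φ (x - θ) ≤ (L * ‖x - θ‖ + K * d) * ‖x - θ‖ :=
    (Real.le_norm_self _).trans (norm_image_sub_sub_le_of_norm_hasFDerivAt_sub_le hL hf hbound x)
  have amgm : K * d * ‖x - θ‖ ≤ c * d ^ 2 + K ^ 2 / (4 * c) * ‖x - θ‖ ^ 2 := by
    calc K * d * ‖x - θ‖ = 2 * d * (K / 2 * ‖x - θ‖) := by ring
      _ ≤ c * d ^ 2 + c⁻¹ * (K / 2 * ‖x - θ‖) ^ 2 := two_mul_le_add_mul_sq hc
      _ = c * d ^ 2 + K ^ 2 / (4 * c) * ‖x - θ‖ ^ 2 := by field_simp; ring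
  linarith

theorem hasFDerivAt_sSup_image_of_quadratic_growth {A : Type*} [PseudoMetricSpace A] {Λ : Set A}
    {F : E → A → ℝ} {F' : E → A → E →L[ℝ] ℝ} {a : A} {c L₁₁ L₁₂ : ℝ}
    (hc : 0 < c) (hL₁₁ : 0 ≤ L₁₁) (ha : a ∈ Λ)
    (hgrowth : ∀ α ∈ Λ, F θ α ≤ F θ a - c * dist α a ^ 2)
    (hF : ∀ x, ∀ α ∈ Λ, HasFDerivAt (F · α) (F' x α) x)
    (hlip : ∀ x, ∀ α ∈ Λ, ‖F' x α - F' θ a‖ ≤ L₁₁ * ‖x - θ‖ + L₁₂ * dist α a) :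
    HasFDerivAt (fun x => sSup (F x '' Λ)) (F' θ a) θ := by
  have hsup : sSup (F θ '' Λ) = F θ a := by
    refine IsGreatest.csSup_eq ⟨mem_image_of_mem _ ha, forall_mem_image.2 fun α hα => ?_⟩
    exact (hgrowth α hα).trans (sub_le_self _ (by positivity))
  refine hasFDerivAt_of_norm_sub_sub_le_mul_sq (C := L₁₁ + L₁₂ ^ 2 / (4 * c)) fun x => ?_
  have hupper : F θ a + F' θ a (x - θ) + (L₁₁ + L₁₂ ^ 2 / (4 * c)) * ‖x - θ‖ ^ 2 ∈
      upperBounds (F x '' Λ) :=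
    forall_mem_image.2 fun α hα =>
      le_add_mul_sq_of_le_sub_mul_sq (f := (F · α)) hc hL₁₁ (hgrowth α hα) (hF · α hα)
        (hlip · α hα) x
  have hsup_le := csSup_le ⟨_, mem_image_of_mem (F x) ha⟩ hupper
  have hle_sup : F x a ≤ sSup (F x '' Λ) := le_csSup ⟨_, hupper⟩ (mem_image_of_mem _ ha)
  have htaylor := norm_image_sub_sub_le_of_norm_hasFDerivAt_sub_le hL₁₁ (hF · a ha) (hlip · a ha) x
  rw [dist_self, mul_zero, add_zero, Real.norm_eq_abs, abs_le] at htaylor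
  have hC : 0 ≤ L₁₂ ^ 2 / (4 * c) * ‖x - θ‖ ^ 2 := by positivity
  rw [hsup, Real.norm_eq_abs, abs_le]
  constructor <;> linarith [htaylor.1]

end Envelope

theorem stmt2_general {E A : Type*} [NormedAddCommGroup E] [NormedSpace ℝ E]
    [NormedAddCommGroup A] [NormedSpace ℝ A] {Λ : Set A} (hΛne : Λ.Nonempty) (hΛ : IsComplete Λ)
    {μ L₁₁ L₁₂ : ℝ} (hμ : 0 < μ) (hL₁₁ : 0 ≤ L₁₁)
    {F : E → A → ℝ} {F' : E → A → E →L[ℝ] ℝ} {θ : E}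
    (husc : UpperSemicontinuousOn (F θ) Λ) (hconcave : StrongConcaveOn Λ μ (F θ))
    (hF : ∀ x, ∀ α ∈ Λ, HasFDerivAt (F · α) (F' x α) x)
    (hlip : ∀ x, ∀ α ∈ Λ, ∀ β ∈ Λ, ‖F' x α - F' θ β‖ ≤ L₁₁ * ‖x - θ‖ + L₁₂ * ‖α - β‖) :
    ∃ a ∈ Λ, IsMaxOn (F θ) Λ a ∧ (∀ b ∈ Λ, IsMaxOn (F θ) Λ b → b = a) ∧
      HasFDerivAt (fun x => sSup (F x '' Λ)) (F' θ a) θ := by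
  obtain ⟨a, ha, hmax⟩ := exists_isMaxOn_of_strongConcaveOn hμ hΛ hΛne hconcave husc
  have hstrict : StrictConcaveOn ℝ Λ (F θ) := hconcave.strictConcaveOn hμ
  refine ⟨a, ha, hmax, fun b hb hbmax => hstrict.eq_of_isMaxOn hbmax hmax hb ha, ?_⟩
  refine hasFDerivAt_sSup_image_of_quadratic_growth (L₁₂ := L₁₂) (half_pos hμ) hL₁₁ ha
    (fun α hα => ?_) hF fun x α hα => ?_
  · simpa only [dist_eq_norm] using le_sub_of_uniformConcaveOn_of_isMaxOn hconcave ha hmax hα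
  · simpa only [dist_eq_norm] using hlip x α hα a ha

/-- Danskin-type theorem: the marginal maximum function
`g(θ) = sup_{α ∈ Λ} F(θ, α)` of a smooth nonconvex–strongly-concave saddle
function is differentiable with gradient `∇_θ F(θ, α*(θ))`, where `α*(θ)`
is the unique maximizer over `Λ`. -/
theorem stmt2 {n q : ℕ} (Λ : Set (EuclideanSpace ℝ (Fin q)))
    (hΛne : Λ.Nonempty) (hΛcompact : IsCompact Λ) (hΛconvex : Convex ℝ Λ)
    (μ L11 L12 L21 : ℝ) (hμ : 0 < μ) (hL11 : 0 ≤ L11) (hL12 : 0 ≤ L12) (hL21 : 0 ≤ L21)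
    (F : EuclideanSpace ℝ (Fin n) → EuclideanSpace ℝ (Fin q) → ℝ)
    (hdiffα : ∀ θ, Differentiable ℝ (F θ))
    (hconcave : ∀ θ, ∀ x ∈ Λ, ∀ y ∈ Λ,
      F θ y ≤ F θ x + ⟪gradient (F θ) x, y - x⟫ - (μ / 2) * ‖y - x‖ ^ 2)
    (hdiffθ : ∀ α, Differentiable ℝ (fun θ => F θ α))
    (hlipθ : ∀ θ₁ θ₂ α₁ α₂,
      ‖gradient (fun θ => F θ α₁) θ₁ - gradient (fun θ => F θ α₂) θ₂‖ ≤
        L11 * ‖θ₁ - θ₂‖ + L12 * ‖α₁ - α₂‖)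
    (hlipα : ∀ (θ₁ θ₂ : EuclideanSpace ℝ (Fin n)), ∀ α ∈ Λ,
      ‖gradient (F θ₁) α - gradient (F θ₂) α‖ ≤ L21 * ‖θ₁ - θ₂‖) :
    ∀ θ : EuclideanSpace ℝ (Fin n), ∃ αstar ∈ Λ,
      (∀ α ∈ Λ, F θ α ≤ F θ αstar) ∧
      (∀ α' ∈ Λ, (∀ α ∈ Λ, F θ α ≤ F θ α') → α' = αstar) ∧
      HasGradientAt (fun θ' => sSup (F θ' '' Λ))
        (gradient (fun θ' => F θ' αstar) θ) θ := fun θ =>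
  stmt2_general hΛne hΛcompact.isComplete hμ hL11
    (hdiffα θ).continuous.continuousOn.upperSemicontinuousOn
    (strongConcaveOn_of_le_add_sub_sq hΛconvex (fun x => innerₗ _ (gradient (F θ) x)) (hconcave θ))
    (fun x α _ => (hdiffθ α x).hasGradientAt.hasFDerivAt)
    fun x α _ β _ => by simpa only [← map_sub, LinearIsometryEquiv.norm_map] using hlipθ x θ α β
end

section
/- Let Λ ⊆ ℝ^q be a nonempty compact convex set, μ > 0, and L₁₁, L₁₂, L₂₁ ≥ 0. Let F : ℝ^n × ℝ^q → ℝ be such that (i) for every θ the map α ↦ F(θ, α) is differentiable on ℝ^q and μ-strongly concave on Λ; (ii) for every α the map θ ↦ F(θ, α) is differentiable with gradient ∇_θ F(θ, α), and ‖∇_θ F(θ₁, α₁) − ∇_θ F(θ₂, α₂)‖ ≤ L₁₁‖θ₁ − θ₂‖ + L₁₂‖α₁ − α₂‖ for all θ₁, θ₂, α₁, α₂; (iii) ‖∇_α F(θ₁, α) − ∇_α F(θ₂, α)‖ ≤ L₂₁‖θ₁ − θ₂‖ for all θ₁, θ₂ and all α ∈ Λ. For each θ let α*(θ) ∈ Λ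 be a maximizer of F(θ, ·) over Λ. Then the map θ ↦ ∇_θ F(θ, α*(θ)) is Lipschitz continuous with constant L₁₁ + L₁₂·L₂₁/μ, i.e., ‖∇_θ F(θ₁, α*(θ₁)) − ∇_θ F(θ₂, α*(θ₂))‖ ≤ (L₁₁ + L₁₂L₂₁/μ)‖θ₁ − θ₂‖ for all θ₁, θ₂ ∈ ℝ^n. -/
open RealInnerProductSpace

/-!
Each maximizer `α*(θ)` satisfies the variational inequality `⟪∇_α F(θ, α*(θ)), y - α*(θ)⟫ ≤ 0` for
`y ∈ Λ`. Testing the inequality at `θ₁` with `α*(θ₂)` and vice versa, and comparing with the strong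
monotonicity `μ ‖x - y‖² ≤ ⟪∇_α F(θ₁, y) - ∇_α F(θ₁, x), x - y⟫`, Cauchy–Schwarz shows that
`θ ↦ α*(θ)` is `L₂₁ / μ`-Lipschitz. Composing with the Lipschitz map `∇_θ F` gives the constant
`L₁₁ + L₁₂ L₂₁ / μ`.
-/

/-- First-order strong concavity with modulus `m` on `s`: for every `x ∈ s`, the vector `f' x` is a
supergradient of `f` on `s` at `x` with quadratic gap `m / 2 * ‖y - x‖ ^ 2`. For `f'` the gradient
of `f` this is `m`-strong concavity of a differentiable function; `f'` is kept as separate data so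
that the monotonicity estimates need no differentiability. -/
def IsStrongSupergradientOn {H : Type*} [NormedAddCommGroup H] [InnerProductSpace ℝ H]
    (s : Set H) (m : ℝ) (f : H → ℝ) (f' : H → H) : Prop :=
  ∀ x ∈ s, ∀ y ∈ s, f y ≤ f x + ⟪f' x, y - x⟫ - m / 2 * ‖y - x‖ ^ 2

theorem IsStrongSupergradientOn.mul_norm_sub_sq_le_inner {H : Type*} [NormedAddCommGroup H]
    [InnerProductSpace ℝ H] {s : Set H} {m : ℝ} {f : H → ℝ} {f' : H → H} {x y : H}
    (hf : IsStrongSupergradientOn s m f f') (hx : x ∈ s) (hy : y ∈ s) :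
    m * ‖x - y‖ ^ 2 ≤ ⟪f' y - f' x, x - y⟫ := by
  have hxy := hf x hx y hy
  have hyx := hf y hy x hx
  rw [← neg_sub x y, inner_neg_right, norm_neg] at hxy
  rw [inner_sub_left]
  linarith

section Maximizers

variable {H : Type*} [NormedAddCommGroup H] [InnerProductSpace ℝ H] [CompleteSpace H]
  {s : Set H} {m : ℝ} {f g : H → ℝ} {f' : H → H} {v x y : H}

theorem inner_sub_nonpos_of_isLocalMaxOn (hmax : IsLocalMaxOn f s x)
    (hgrad : HasGradientWithinAt f v s x) (hseg : segment ℝ x y ⊆ s) : ⟪v, y - x⟫ ≤ 0 :=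
  hmax.hasFDerivWithinAt_nonpos hgrad.hasFDerivWithinAt
    (sub_mem_posTangentConeAt_of_segment_subset hseg)

theorem IsStrongSupergradientOn.mul_norm_sub_le_of_isMaxOn
    (hf : IsStrongSupergradientOn s m f f') (hs : Convex ℝ s) (hx : x ∈ s) (hy : y ∈ s)
    (hfx : HasGradientWithinAt f (f' x) s x) (hgy : HasGradientWithinAt g v s y)
    (hfmax : IsMaxOn f s x) (hgmax : IsMaxOn g s y) :
    m * ‖x - y‖ ≤ ‖f' y - v‖ := by
  have hVIx : ⟪f' x, y - x⟫ ≤ 0 :=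
    inner_sub_nonpos_of_isLocalMaxOn hfmax.localize hfx (hs.segment_subset hx hy)
  have hVIy : ⟪v, x - y⟫ ≤ 0 :=
    inner_sub_nonpos_of_isLocalMaxOn hgmax.localize hgy (hs.segment_subset hy hx)
  have hsq : m * ‖x - y‖ * ‖x - y‖ ≤ ‖f' y - v‖ * ‖x - y‖ :=
    calc m * ‖x - y‖ * ‖x - y‖ = m * ‖x - y‖ ^ 2 := by ring
      _ ≤ ⟪f' y - f' x, x - y⟫ := hf.mul_norm_sub_sq_le_inner hx hy
      _ = ⟪f' y - v, x - y⟫ + ⟪v, x - y⟫ + ⟪f' x, y - x⟫ := by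
        rw [← neg_sub x y, inner_neg_right, inner_sub_left, inner_sub_left]; ring
      _ ≤ ⟪f' y - v, x - y⟫ := by linarith
      _ ≤ ‖f' y - v‖ * ‖x - y‖ := real_inner_le_norm _ _
  rcases (norm_nonneg (x - y)).eq_or_lt with hzero | hpos
  · rw [← hzero, mul_zero]
    exact norm_nonneg _
  · exact le_of_mul_le_mul_right hsq hpos

variable {X : Type*} [PseudoMetricSpace X] {F : X → H → ℝ} {gradF : X → H → H} {αstar : X → H}
  {L : ℝ}

theorem dist_argmax_le (hs : Convex ℝ s) (hm : 0 < m)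
    (hconcave : ∀ θ, IsStrongSupergradientOn s m (F θ) (gradF θ))
    (hgrad : ∀ θ, ∀ α ∈ s, HasGradientWithinAt (F θ) (gradF θ α) s α)
    (hlip : ∀ θ₁ θ₂, ∀ α ∈ s, dist (gradF θ₁ α) (gradF θ₂ α) ≤ L * dist θ₁ θ₂)
    (hmem : ∀ θ, αstar θ ∈ s) (hmax : ∀ θ, IsMaxOn (F θ) s (αstar θ)) (θ₁ θ₂ : X) :
    dist (αstar θ₁) (αstar θ₂) ≤ L / m * dist θ₁ θ₂ := by
  rw [dist_eq_norm, div_mul_eq_mul_div, le_div_iff₀' hm]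
  calc m * ‖αstar θ₁ - αstar θ₂‖
      ≤ ‖gradF θ₁ (αstar θ₂) - gradF θ₂ (αstar θ₂)‖ :=
        (hconcave θ₁).mul_norm_sub_le_of_isMaxOn hs (hmem θ₁) (hmem θ₂)
          (hgrad θ₁ _ (hmem θ₁)) (hgrad θ₂ _ (hmem θ₂)) (hmax θ₁) (hmax θ₂)
    _ = dist (gradF θ₁ (αstar θ₂)) (gradF θ₂ (αstar θ₂)) := (dist_eq_norm _ _).symm
    _ ≤ L * dist θ₁ θ₂ := hlip θ₁ θ₂ _ (hmem θ₂)

-- `G` plays the role of `∇_θ F`, and `gradF` that of `∇_α F`.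
theorem stmt3_general {Y : Type*} [PseudoMetricSpace Y] {G : X → H → Y} {L11 L12 L21 : ℝ}
    (hs : Convex ℝ s) (hm : 0 < m) (hL12 : 0 ≤ L12)
    (hconcave : ∀ θ, IsStrongSupergradientOn s m (F θ) (gradF θ))
    (hgrad : ∀ θ, ∀ α ∈ s, HasGradientWithinAt (F θ) (gradF θ α) s α)
    (hlipG : ∀ θ₁ θ₂, ∀ α₁ ∈ s, ∀ α₂ ∈ s,
      dist (G θ₁ α₁) (G θ₂ α₂) ≤ L11 * dist θ₁ θ₂ + L12 * dist α₁ α₂)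
    (hlip : ∀ θ₁ θ₂, ∀ α ∈ s, dist (gradF θ₁ α) (gradF θ₂ α) ≤ L21 * dist θ₁ θ₂)
    (hmem : ∀ θ, αstar θ ∈ s) (hmax : ∀ θ, IsMaxOn (F θ) s (αstar θ)) (θ₁ θ₂ : X) :
    dist (G θ₁ (αstar θ₁)) (G θ₂ (αstar θ₂)) ≤ (L11 + L12 * L21 / m) * dist θ₁ θ₂ :=
  calc dist (G θ₁ (αstar θ₁)) (G θ₂ (αstar θ₂))
      ≤ L11 * dist θ₁ θ₂ + L12 * dist (αstar θ₁) (αstar θ₂) :=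
        hlipG θ₁ θ₂ _ (hmem θ₁) _ (hmem θ₂)
    _ ≤ L11 * dist θ₁ θ₂ + L12 * (L21 / m * dist θ₁ θ₂) := by
        gcongr
        exact dist_argmax_le hs hm hconcave hgrad hlip hmem hmax θ₁ θ₂
    _ = (L11 + L12 * L21 / m) * dist θ₁ θ₂ := by ring

end Maximizers

/-- the map `θ ↦ ∇_θ F(θ, α*(θ))` is Lipschitz with constant
`L₁₁ + L₁₂ L₂₁ / μ`, where `α*(θ)` is a maximizer of the `μ`-strongly concave
function `F(θ, ·)` over `Λ`. -/
theorem stmt3 {n q : ℕ} (Λ : Set (EuclideanSpace ℝ (Fin q)))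
    (hΛne : Λ.Nonempty) (hΛcompact : IsCompact Λ) (hΛconvex : Convex ℝ Λ)
    (μ L11 L12 L21 : ℝ) (hμ : 0 < μ) (hL11 : 0 ≤ L11) (hL12 : 0 ≤ L12) (hL21 : 0 ≤ L21)
    (F : EuclideanSpace ℝ (Fin n) → EuclideanSpace ℝ (Fin q) → ℝ)
    (hdiffα : ∀ θ, Differentiable ℝ (F θ))
    (hconcave : ∀ θ, ∀ x ∈ Λ, ∀ y ∈ Λ,
      F θ y ≤ F θ x + ⟪gradient (F θ) x, y - x⟫ - (μ / 2) * ‖y - x‖ ^ 2)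
    (hdiffθ : ∀ α, Differentiable ℝ (fun θ => F θ α))
    (hlipθ : ∀ θ₁ θ₂ α₁ α₂,
      ‖gradient (fun θ => F θ α₁) θ₁ - gradient (fun θ => F θ α₂) θ₂‖ ≤
        L11 * ‖θ₁ - θ₂‖ + L12 * ‖α₁ - α₂‖)
    (hlipα : ∀ (θ₁ θ₂ : EuclideanSpace ℝ (Fin n)), ∀ α ∈ Λ,
      ‖gradient (F θ₁) α - gradient (F θ₂) α‖ ≤ L21 * ‖θ₁ - θ₂‖)
    (αstar : EuclideanSpace ℝ (Fin n) → EuclideanSpace ℝ (Fin q))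
    (hαstar_mem : ∀ θ, αstar θ ∈ Λ)
    (hαstar_max : ∀ θ, ∀ α ∈ Λ, F θ α ≤ F θ (αstar θ)) :
    ∀ θ₁ θ₂ : EuclideanSpace ℝ (Fin n),
      ‖gradient (fun θ => F θ (αstar θ₁)) θ₁ - gradient (fun θ => F θ (αstar θ₂)) θ₂‖ ≤
        (L11 + L12 * L21 / μ) * ‖θ₁ - θ₂‖ := by
  simp only [← dist_eq_norm] at hlipθ hlipα ⊢
  exact stmt3_general (gradF := fun θ => gradient (F θ)) (G := fun θ α => gradient (F · α) θ)
    hΛconvex hμ hL12 hconcave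
    (fun θ α _ => (hdiffα θ α).hasGradientAt.hasFDerivAt.hasFDerivWithinAt)
    (fun θ₁ θ₂ α₁ _ α₂ _ => hlipθ θ₁ θ₂ α₁ α₂) hlipα hαstar_mem hαstar_max
end

section
/- Let Θ ⊆ ℝ^n and Λ ⊆ ℝ^q be nonempty compact sets, and let F : ℝ^n × ℝ^q → ℝ be continuous and, for each α, differentiable in θ with gradient ∇_θ F(θ, α). Define g(θ) := sup_{α ∈ Λ} F(θ, α). Suppose there is C > 0 such that for every α ∈ Λ and every θ ∈ Θ: F(θ, α) − inf_{θ' ∈ Θ} F(θ', α) ≤ C · sup_{θ̄ ∈ Θ} ⟨θ − θ̄, ∇_θ F(θ, α)⟩. Then for every θ ∈ Θ and every α̂ ∈ Λ maximizing F(θ, ·) over Λ: g(θ) − inf_{θ' ∈ Θ} g(θ') ≤ C · sup_{θ̄ ∈ Θ} ⟨θ − θ̄, ∇_θ F(θ, α̂)⟩. -/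
open RealInnerProductSpace

/-!
For a maximizer `α̂` of `F(θ, ·)`, the function `F(·, α̂)` lies below `g` on `Θ` and touches it at
`θ`. Passing from `F(·, α̂)` to `g` thus keeps the value at `θ` and can only raise the infimum over
`Θ`, so any bound on the suboptimality of `θ` for `F(·, α̂)` also holds for `g`.
-/

section SuboptimalityGap

variable {X A R : Type*} [ConditionallyCompleteLattice R] [AddCommGroup R]

/-- The suboptimality gap `f x - inf_S f` of a point `x` in the minimization of `f` over `S`. It is
meaningful for `f` bounded below on the nonempty set `S`, as `sInf` takes a junk value otherwise. -/
def suboptimalityGap (f : X → R) (S : Set X) (x : X) : R :=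
  f x - sInf (f '' S)

variable [IsOrderedAddMonoid R]

theorem suboptimalityGap_le_of_touching_minorant {f g : X → R} {S : Set X} {x : X} (hx : x ∈ S)
    (hf : BddBelow (f '' S)) (hfg : ∀ y ∈ S, f y ≤ g y) (htouch : g x ≤ f x) :
    suboptimalityGap g S x ≤ suboptimalityGap f S x := by
  have inf_mono : sInf (f '' S) ≤ sInf (g '' S) := by
    refine le_csInf (Set.nonempty_of_mem (Set.mem_image_of_mem g hx)) ?_
    rintro _ ⟨y, hy, rfl⟩
    exact (csInf_le hf (Set.mem_image_of_mem f hy)).trans (hfg y hy)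
  exact sub_le_sub htouch inf_mono

theorem stmt4_general {Θ : Set X} {Λ : Set A} {F : X → A → R} {θ : X} {α : A} {r : R}
    (hθ : θ ∈ Θ) (hα : α ∈ Λ) (hbelow : BddBelow ((fun θ' => F θ' α) '' Θ))
    (habove : ∀ θ' ∈ Θ, BddAbove (F θ' '' Λ)) (hmax : IsMaxOn (F θ) Λ α)
    (hgap : suboptimalityGap (fun θ' => F θ' α) Θ θ ≤ r) :
    suboptimalityGap (fun θ' => sSup (F θ' '' Λ)) Θ θ ≤ r := by
  have minorant : ∀ θ' ∈ Θ, F θ' α ≤ sSup (F θ' '' Λ) := fun θ' hθ' =>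
    le_csSup (habove θ' hθ') (Set.mem_image_of_mem (F θ') hα)
  have touch : sSup (F θ '' Λ) ≤ F θ α :=
    csSup_le (Set.nonempty_of_mem (Set.mem_image_of_mem (F θ) hα)) (Set.forall_mem_image.mpr hmax)
  exact (suboptimalityGap_le_of_touching_minorant hθ hbelow minorant touch).trans hgap

end SuboptimalityGap

/-- the gradient dominance property transfers from `F(·, α)`
(uniformly in `α ∈ Λ`) to the pointwise maximum `g(θ) = sup_{α ∈ Λ} F(θ, α)`,
when evaluated at the maximizer `α̂` of `F(θ, ·)`. -/
theorem stmt4 {n q : ℕ}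
    (Θ : Set (EuclideanSpace ℝ (Fin n))) (Λ : Set (EuclideanSpace ℝ (Fin q)))
    (hΘne : Θ.Nonempty) (hΘcompact : IsCompact Θ)
    (hΛne : Λ.Nonempty) (hΛcompact : IsCompact Λ)
    (F : EuclideanSpace ℝ (Fin n) → EuclideanSpace ℝ (Fin q) → ℝ)
    (hcont : Continuous (fun p : EuclideanSpace ℝ (Fin n) × EuclideanSpace ℝ (Fin q) =>
      F p.1 p.2))
    (hdiffθ : ∀ α, Differentiable ℝ (fun θ => F θ α))
    (C : ℝ) (hC : 0 < C)
    (hgd : ∀ α ∈ Λ, ∀ θ ∈ Θ,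
      F θ α - sInf ((fun θ' => F θ' α) '' Θ) ≤
        C * sSup ((fun θbar => ⟪θ - θbar, gradient (fun θ' => F θ' α) θ⟫) '' Θ)) :
    ∀ θ ∈ Θ, ∀ αhat ∈ Λ, (∀ α ∈ Λ, F θ α ≤ F θ αhat) →
      sSup (F θ '' Λ) - sInf ((fun θ' => sSup (F θ' '' Λ)) '' Θ) ≤
        C * sSup ((fun θbar => ⟪θ - θbar, gradient (fun θ' => F θ' αhat) θ⟫) '' Θ) := by
  intro θ hθ αhat hαhat hmax
  exact stmt4_general hθ hαhat (hΘcompact.bddBelow_image (by fun_prop))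
    (fun θ' _ => hΛcompact.bddAbove_image (by fun_prop)) hmax (hgd αhat hαhat θ hθ)
end

section
/- Let Λ ⊆ ℝ^q be a nonempty closed convex set, let μ > 0 and L ≥ μ, and let f : ℝ^q → ℝ be differentiable on ℝ^q, μ-strongly concave on Λ, and with ‖∇f(x) − ∇f(y)‖ ≤ L‖x − y‖ for all x, y ∈ Λ. Let α* ∈ Λ be a maximizer of f over Λ. Set β = μ/(4L²). Let α ∈ Λ, v ∈ ℝ^q, and let α⁺ ∈ Λ be the metric projection of α + βv onto Λ. Then ‖α⁺ − α*‖² ≤ (1 − μ²/(8L²))‖α − α*‖² + (3/(8L²))‖v − ∇f(α)‖². -/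
open RealInnerProductSpace

/-!
A maximizer `α*` of `f` over `Λ` satisfies the first-order condition `⟪∇f(α*), y - α*⟫ ≤ 0` on `Λ`,
which says that `α*` is the projection of `α* + β ∇f(α*)`. Projections are nonexpansive, so
`‖α⁺ - α*‖` is at most the norm of `(α - α*) + β (∇f(α) - ∇f(α*)) + β (v - ∇f(α))`. Strong concavity
and the Lipschitz bound give the exact step, consisting of the first two terms, a squared norm of at
most `(1 - 2βμ + β²L²) ‖α - α*‖²`. Separating the error term by Young's inequality with parameter
`βμ` gives the contraction for every stepsize `β ≤ μ / (2L²)`.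
-/

theorem apply_sub_nonpos_of_isLocalMaxOn_of_starConvex {E : Type*} [NormedAddCommGroup E]
    [NormedSpace ℝ E] {s : Set E} {f : E → ℝ} {f' : E →L[ℝ] ℝ} {x y : E}
    (hmax : IsLocalMaxOn f s x) (hs : StarConvex ℝ x s) (hf : HasFDerivWithinAt f f' s x)
    (hy : y ∈ s) : f' (y - x) ≤ 0 :=
  hmax.hasFDerivWithinAt_nonpos hf
    (sub_mem_posTangentConeAt_of_segment_subset (hs.segment_subset hy))

theorem norm_add_sq_le_of_pos {E : Type*} [SeminormedAddGroup E] (x y : E) {t : ℝ} (ht : 0 < t) :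
    ‖x + y‖ ^ 2 ≤ (1 + t) * ‖x‖ ^ 2 + (1 + t⁻¹) * ‖y‖ ^ 2 := by
  have hyoung : 2 * ‖x‖ * ‖y‖ ≤ t * ‖x‖ ^ 2 + t⁻¹ * ‖y‖ ^ 2 := two_mul_le_add_mul_sq ht
  calc ‖x + y‖ ^ 2 ≤ (‖x‖ + ‖y‖) ^ 2 := by
        gcongr
        exact norm_add_le x y
    _ = ‖x‖ ^ 2 + 2 * ‖x‖ * ‖y‖ + ‖y‖ ^ 2 := add_sq _ _
    _ ≤ (1 + t) * ‖x‖ ^ 2 + (1 + t⁻¹) * ‖y‖ ^ 2 := by linarith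

theorem one_add_mul_one_sub_two_mul_add_le {t r : ℝ} (ht : 0 ≤ t) (hr : r ≤ t / 2) :
    (1 + t) * (1 - 2 * t + r) ≤ 1 - t / 2 := by
  calc (1 + t) * (1 - 2 * t + r) ≤ (1 + t) * (1 - 2 * t + t / 2) := by gcongr
    _ = 1 - t / 2 - 3 / 2 * t ^ 2 := by ring
    _ ≤ 1 - t / 2 := sub_le_self _ (by positivity)

section InnerProductSpace

variable {E : Type*} [NormedAddCommGroup E] [InnerProductSpace ℝ E]

theorem inner_sub_sub_le_of_stronglyConcave {s : Set E} {f : E → ℝ} {g : E → E} {μ : ℝ}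
    (hf : ∀ x ∈ s, ∀ y ∈ s, f y ≤ f x + ⟪g x, y - x⟫ - μ / 2 * ‖y - x‖ ^ 2)
    {x y : E} (hx : x ∈ s) (hy : y ∈ s) :
    ⟪x - y, g x - g y⟫ ≤ -μ * ‖x - y‖ ^ 2 := by
  have hxy := hf x hx y hy
  have hyx := hf y hy x hx
  rw [← neg_sub x y, inner_neg_right, norm_neg] at hxy
  rw [inner_sub_right, real_inner_comm, real_inner_comm (g y)]
  linarith

theorem norm_sub_le_of_inner_sub_nonpos {x x' p p' : E}
    (hp : ⟪x - p, p' - p⟫ ≤ 0) (hp' : ⟪x' - p', p - p'⟫ ≤ 0) :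
    ‖p - p'‖ ≤ ‖x - x'‖ := by
  have hinner : ‖p - p'‖ ^ 2 ≤ ⟪x - x', p - p'⟫ := by
    have hsplit : x - x' = (x - p) - (x' - p') + (p - p') := by abel
    rw [← neg_sub p p', inner_neg_right] at hp
    rw [hsplit, inner_add_left, inner_sub_left, real_inner_self_eq_norm_sq]
    linarith
  have hsq : ‖p - p'‖ ^ 2 ≤ ‖x - x'‖ ^ 2 := by
    have hexpand := norm_sub_sq_real (x - x') (p - p')
    linarith [sq_nonneg ‖(x - x') - (p - p')‖]
  exact (sq_le_sq₀ (norm_nonneg _) (norm_nonneg _)).1 hsq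

theorem norm_add_smul_sq_le {d h : E} {μ L β : ℝ} (hβ : 0 ≤ β)
    (hinner : ⟪d, h⟫ ≤ -μ * ‖d‖ ^ 2) (hnorm : ‖h‖ ≤ L * ‖d‖) :
    ‖d + β • h‖ ^ 2 ≤ (1 - 2 * (β * μ) + β ^ 2 * L ^ 2) * ‖d‖ ^ 2 := by
  have hnorm_sq : ‖h‖ ^ 2 ≤ L ^ 2 * ‖d‖ ^ 2 := by
    rw [← mul_pow]
    gcongr
  calc ‖d + β • h‖ ^ 2 = ‖d‖ ^ 2 + 2 * β * ⟪d, h⟫ + β ^ 2 * ‖h‖ ^ 2 := by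
        rw [norm_add_sq_real, real_inner_smul_right, norm_smul, mul_pow, Real.norm_eq_abs, sq_abs]
        ring
    _ ≤ ‖d‖ ^ 2 + 2 * β * (-μ * ‖d‖ ^ 2) + β ^ 2 * (L ^ 2 * ‖d‖ ^ 2) := by gcongr
    _ = (1 - 2 * (β * μ) + β ^ 2 * L ^ 2) * ‖d‖ ^ 2 := by ring

theorem norm_add_smul_add_smul_sq_le {d h : E} (e : E) {μ L β : ℝ} (hμ : 0 < μ) (hL : μ ≤ L)
    (hβ : 0 < β) (hβL : β ≤ μ / (2 * L ^ 2))
    (hinner : ⟪d, h⟫ ≤ -μ * ‖d‖ ^ 2) (hnorm : ‖h‖ ≤ L * ‖d‖) :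
    ‖d + β • h + β • e‖ ^ 2 ≤
      (1 - β * μ / 2) * ‖d‖ ^ 2 + 3 * β / (2 * μ) * ‖e‖ ^ 2 := by
  have hL₀ : 0 < L := hμ.trans_le hL
  have hβμ : 0 < β * μ := mul_pos hβ hμ
  have hcontract : (1 + β * μ) * (1 - 2 * (β * μ) + β ^ 2 * L ^ 2) ≤ 1 - β * μ / 2 := by
    have hquad : β ^ 2 * L ^ 2 ≤ β * μ / 2 := by
      calc β ^ 2 * L ^ 2 = β * β * L ^ 2 := by ring
        _ ≤ β * (μ / (2 * L ^ 2)) * L ^ 2 := by gcongr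
        _ = β * μ / 2 := by field_simp
    exact one_add_mul_one_sub_two_mul_add_le hβμ.le hquad
  have herror : (1 + (β * μ)⁻¹) * β ^ 2 ≤ 3 * β / (2 * μ) := by
    have hβ_le : β ≤ 1 / (2 * μ) := by
      calc β ≤ μ / (2 * L ^ 2) := hβL
        _ ≤ μ / (2 * μ ^ 2) := by gcongr
        _ = 1 / (2 * μ) := by field_simp
    calc (1 + (β * μ)⁻¹) * β ^ 2 = β * (β + 1 / μ) := by field_simp
      _ ≤ β * (1 / (2 * μ) + 1 / μ) := by gcongr
      _ = 3 * β / (2 * μ) := by field_simp; norm_num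
  calc ‖d + β • h + β • e‖ ^ 2
      ≤ (1 + β * μ) * ‖d + β • h‖ ^ 2 + (1 + (β * μ)⁻¹) * ‖β • e‖ ^ 2 :=
        norm_add_sq_le_of_pos _ _ hβμ
    _ ≤ (1 + β * μ) * ((1 - 2 * (β * μ) + β ^ 2 * L ^ 2) * ‖d‖ ^ 2) +
          (1 + (β * μ)⁻¹) * (β ^ 2 * ‖e‖ ^ 2) := by
        rw [norm_smul, mul_pow, Real.norm_eq_abs, sq_abs]
        gcongr
        exact norm_add_smul_sq_le hβ.le hinner hnorm
    _ = (1 + β * μ) * (1 - 2 * (β * μ) + β ^ 2 * L ^ 2) * ‖d‖ ^ 2 +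
          (1 + (β * μ)⁻¹) * β ^ 2 * ‖e‖ ^ 2 := by ring
    _ ≤ (1 - β * μ / 2) * ‖d‖ ^ 2 + 3 * β / (2 * μ) * ‖e‖ ^ 2 :=
        add_le_add (mul_le_mul_of_nonneg_right hcontract (sq_nonneg _))
          (mul_le_mul_of_nonneg_right herror (sq_nonneg _))

-- `HasGradientWithinAt` would force `E` to be complete, so `hg` uses `innerSL ℝ (g x)` instead.
theorem stmt5_general {Λ : Set E} {f : E → ℝ} {g : E → E} {μ L β : ℝ} (hμ : 0 < μ) (hL : μ ≤ L)
    (hβ : 0 < β) (hβL : β ≤ μ / (2 * L ^ 2))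
    (hg : ∀ x ∈ Λ, HasFDerivWithinAt f (innerSL ℝ (g x)) Λ x)
    (hconcave : ∀ x ∈ Λ, ∀ y ∈ Λ, f y ≤ f x + ⟪g x, y - x⟫ - μ / 2 * ‖y - x‖ ^ 2)
    (hlip : ∀ x ∈ Λ, ∀ y ∈ Λ, ‖g x - g y‖ ≤ L * ‖x - y‖)
    {αstar : E} (hstar : StarConvex ℝ αstar Λ) (hαstar : αstar ∈ Λ) (hmax : IsMaxOn f Λ αstar)
    {α : E} (hα : α ∈ Λ) (v : E) {αplus : E} (hαplus : αplus ∈ Λ)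
    (hproj : ∀ y ∈ Λ, ⟪(α + β • v) - αplus, y - αplus⟫ ≤ 0) :
    ‖αplus - αstar‖ ^ 2 ≤
      (1 - β * μ / 2) * ‖α - αstar‖ ^ 2 + 3 * β / (2 * μ) * ‖v - g α‖ ^ 2 := by
  have hopt : ⟪g αstar, αplus - αstar⟫ ≤ 0 :=
    apply_sub_nonpos_of_isLocalMaxOn_of_starConvex hmax.localize hstar (hg αstar hαstar) hαplus
  have hfixed : ⟪(αstar + β • g αstar) - αstar, αplus - αstar⟫ ≤ 0 := by
    rw [add_sub_cancel_left, real_inner_smul_left]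
    exact mul_nonpos_of_nonneg_of_nonpos hβ.le hopt
  calc ‖αplus - αstar‖ ^ 2 ≤ ‖(α + β • v) - (αstar + β • g αstar)‖ ^ 2 := by
        gcongr
        exact norm_sub_le_of_inner_sub_nonpos (hproj αstar hαstar) hfixed
    _ = ‖(α - αstar) + β • (g α - g αstar) + β • (v - g α)‖ ^ 2 := by
        congr 2
        module
    _ ≤ _ := norm_add_smul_add_smul_sq_le _ hμ hL hβ hβL
        (inner_sub_sub_le_of_stronglyConcave hconcave hα hαstar) (hlip α hα αstar hαstar)

end InnerProductSpace

/-- one-step contraction of an inexact projected gradient ascent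
step on a `μ`-strongly concave function with `L`-Lipschitz gradient,
with stepsize `β = μ/(4L²)`. -/
theorem stmt5 {q : ℕ} (Λ : Set (EuclideanSpace ℝ (Fin q)))
    (hΛne : Λ.Nonempty) (hΛclosed : IsClosed Λ) (hΛconvex : Convex ℝ Λ)
    (μ L : ℝ) (hμ : 0 < μ) (hL : μ ≤ L)
    (f : EuclideanSpace ℝ (Fin q) → ℝ)
    (hdiff : Differentiable ℝ f)
    (hconcave : ∀ x ∈ Λ, ∀ y ∈ Λ,
      f y ≤ f x + ⟪gradient f x, y - x⟫ - (μ / 2) * ‖y - x‖ ^ 2)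
    (hlip : ∀ x ∈ Λ, ∀ y ∈ Λ, ‖gradient f x - gradient f y‖ ≤ L * ‖x - y‖)
    (αstar : EuclideanSpace ℝ (Fin q)) (hαstar : αstar ∈ Λ)
    (hmax : ∀ α ∈ Λ, f α ≤ f αstar)
    (β : ℝ) (hβ : β = μ / (4 * L ^ 2))
    (α : EuclideanSpace ℝ (Fin q)) (hα : α ∈ Λ)
    (v : EuclideanSpace ℝ (Fin q))
    (αplus : EuclideanSpace ℝ (Fin q)) (hαplus : αplus ∈ Λ)
    (hproj : ∀ y ∈ Λ, ⟪(α + β • v) - αplus, y - αplus⟫ ≤ 0) :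
    ‖αplus - αstar‖ ^ 2 ≤
      (1 - μ ^ 2 / (8 * L ^ 2)) * ‖α - αstar‖ ^ 2 +
        (3 / (8 * L ^ 2)) * ‖v - gradient f α‖ ^ 2 := by
  have hL₀ : 0 < L := hμ.trans_le hL
  subst hβ
  convert stmt5_general hμ hL (by positivity) (by gcongr; norm_num)
    (fun x _ ↦ (hdiff x).hasGradientAt.hasFDerivAt.hasFDerivWithinAt) hconcave hlip
    (hΛconvex.starConvex hαstar) hαstar hmax hα v hαplus hproj using 3 <;> field_simp <;>
    ring
end

section
/- Let Θ ⊆ ℝ^n be a nonempty compact convex set with ‖u‖ ≤ R for all u ∈ Θ, and let g : ℝ^n → ℝ be differentiable with L-Lipschitz gradient (L ≥ 0). Let θ ∈ Θ, d ∈ ℝ^n, η ∈ (0, 1], let v̂ ∈ Θ satisfy ⟨d, v̂⟩ ≤ ⟨d, u⟩ for all u ∈ Θ, and set θ⁺ = θ + η(v̂ − θ). Then for every u ∈ Θ: ⟨∇g(θ), θ − u⟩ ≤ (g(θ) − g(θ⁺))/η + 2LηR² + 4R‖d − ∇g(θ)‖. -/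
open RealInnerProductSpace

/-!
The descent lemma along the segment from `θ` to `θ⁺` bounds the gap `⟪∇g(θ), θ - v̂⟫` towards `v̂`
by the decrease of `g` divided by `η` plus a curvature term. Since `v̂` minimizes `⟪d, ·⟫` over `Θ`,
replacing `v̂` by any other `u ∈ Θ` raises the gap by at most `⟪d - ∇g(θ), u - v̂⟫`, which
Cauchy–Schwarz controls.
-/

open AffineMap Set

theorem hasDerivAt_const_add_mul_add_mul_sq (a b c t : ℝ) :
    HasDerivAt (fun s => a + b * s + c / 2 * s ^ 2) (b + c * t) t := by
  have linear := ((hasDerivAt_id t).const_mul b).const_add a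
  have quadratic := (hasDerivAt_pow 2 t).const_mul (c / 2)
  exact (linear.add quadratic).congr_deriv (by norm_num; ring)

theorem image_one_le_of_deriv_le_affine {f f' : ℝ → ℝ} {b c : ℝ}
    (hf : ∀ t ∈ Icc 0 1, HasDerivAt f (f' t) t) (hf' : ∀ t ∈ Icc 0 1, f' t ≤ b + c * t) :
    f 1 ≤ f 0 + b + c / 2 := by
  have deriv_bound := hasDerivAt_const_add_mul_add_mul_sq (f 0) b c
  simpa using image_le_of_deriv_right_le_deriv_boundary
    (fun t ht => (hf t ht).continuousAt.continuousWithinAt)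
    (fun t ht => (hf t (Ico_subset_Icc_self ht)).hasDerivWithinAt) (by simp)
    (fun t _ => (deriv_bound t).continuousAt.continuousWithinAt)
    (fun t _ => (deriv_bound t).hasDerivWithinAt)
    (fun t ht => hf' t (Ico_subset_Icc_self ht)) (right_mem_Icc.2 zero_le_one)

section InnerProductSpace

variable {E : Type*} [NormedAddCommGroup E] [InnerProductSpace ℝ E]

theorem inner_sub_le_inner_sub_add_of_inner_le {d v u : E} (h : ⟪d, v⟫ ≤ ⟪d, u⟫) (p x : E) :
    ⟪p, x - u⟫ ≤ ⟪p, x - v⟫ + ‖d - p‖ * ‖u - v‖ := by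
  have cauchy_schwarz : ⟪d - p, u - v⟫ ≤ ‖d - p‖ * ‖u - v‖ := real_inner_le_norm _ _
  simp only [inner_sub_left, inner_sub_right] at cauchy_schwarz ⊢
  linarith

theorem inner_le_inner_add_of_norm_sub_le {p q w : E} {C : ℝ} (h : ‖q - p‖ ≤ C * ‖w‖) :
    ⟪q, w⟫ ≤ ⟪p, w⟫ + C * ‖w‖ ^ 2 := by
  have inner_sub_le : ⟪q - p, w⟫ ≤ C * ‖w‖ ^ 2 :=
    calc ⟪q - p, w⟫ ≤ ‖q - p‖ * ‖w‖ := real_inner_le_norm _ _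
      _ ≤ C * ‖w‖ * ‖w‖ := by gcongr
      _ = C * ‖w‖ ^ 2 := by ring
  rwa [inner_sub_left, sub_le_iff_le_add'] at inner_sub_le

variable [CompleteSpace E] {g : E → ℝ} {g' : E → E}

theorem hasDerivAt_comp_lineMap_of_hasGradientAt {x y p : E} {t : ℝ}
    (hg : HasGradientAt g p (lineMap x y t)) :
    HasDerivAt (fun s : ℝ => g (lineMap x y s)) ⟪p, y - x⟫ t :=
  hg.hasFDerivAt.comp_hasDerivAt t hasDerivAt_lineMap

theorem le_add_inner_add_sq_of_norm_gradient_sub_le {x y : E} {L : ℝ}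
    (hg : ∀ z ∈ segment ℝ x y, HasGradientAt g (g' z) z)
    (hlip : ∀ z ∈ segment ℝ x y, ‖g' z - g' x‖ ≤ L * ‖z - x‖) :
    g y ≤ g x + ⟪g' x, y - x⟫ + L / 2 * ‖y - x‖ ^ 2 := by
  have mem_segment {t : ℝ} (ht : t ∈ Icc 0 1) : lineMap x y t ∈ segment ℝ x y :=
    segment_eq_image_lineMap ℝ x y ▸ mem_image_of_mem _ ht
  have deriv_le (t : ℝ) (ht : t ∈ Icc 0 1) :
      ⟪g' (lineMap x y t), y - x⟫ ≤ ⟪g' x, y - x⟫ + L * ‖y - x‖ ^ 2 * t := by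
    have norm_lineMap_sub : ‖lineMap x y t - x‖ = t * ‖y - x‖ := by
      rw [lineMap_apply_module', add_sub_cancel_right, norm_smul, Real.norm_of_nonneg ht.1]
    have norm_gradient_sub_le := hlip _ (mem_segment ht)
    rw [norm_lineMap_sub, ← mul_assoc] at norm_gradient_sub_le
    exact (inner_le_inner_add_of_norm_sub_le norm_gradient_sub_le).trans_eq (by ring)
  have comparison := image_one_le_of_deriv_le_affine
    (fun t ht => hasDerivAt_comp_lineMap_of_hasGradientAt (hg _ (mem_segment ht))) deriv_le
  rwa [lineMap_apply_zero, lineMap_apply_one, mul_div_right_comm] at comparison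

theorem inner_gradient_sub_le_div_add {x v : E} {L η : ℝ} (hη : 0 < η)
    (hg : ∀ z ∈ segment ℝ x (x + η • (v - x)), HasGradientAt g (g' z) z)
    (hlip : ∀ z ∈ segment ℝ x (x + η • (v - x)), ‖g' z - g' x‖ ≤ L * ‖z - x‖) :
    ⟪g' x, x - v⟫ ≤ (g x - g (x + η • (v - x))) / η + L / 2 * η * ‖v - x‖ ^ 2 := by
  have descent := le_add_inner_add_sq_of_norm_gradient_sub_le hg hlip
  rw [add_sub_cancel_left, inner_smul_right, norm_smul, Real.norm_of_nonneg hη.le] at descent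
  rw [← neg_sub v x, inner_neg_right, ← sub_le_iff_le_add, le_div_iff₀ hη]
  linarith

theorem stmt8_general {Θ : Set E} {R : ℝ} (hR : ∀ u ∈ Θ, ‖u‖ ≤ R) {L : ℝ} (hL : 0 ≤ L)
    {θ d v θplus : E} (hθ : θ ∈ Θ) {η : ℝ} (hη : 0 < η) (hv : v ∈ Θ)
    (hvmin : ∀ u ∈ Θ, ⟪d, v⟫ ≤ ⟪d, u⟫) (hθplus : θplus = θ + η • (v - θ))
    (hg : ∀ z ∈ segment ℝ θ θplus, DifferentiableAt ℝ g z)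
    (hlip : ∀ z ∈ segment ℝ θ θplus, ‖gradient g z - gradient g θ‖ ≤ L * ‖z - θ‖) :
    ∀ u ∈ Θ, ⟪gradient g θ, θ - u⟫ ≤
      (g θ - g θplus) / η + 2 * L * η * R ^ 2 + 4 * R * ‖d - gradient g θ‖ := by
  intro u hu
  subst hθplus
  have norm_sub_le_two_mul {a b : E} (ha : a ∈ Θ) (hb : b ∈ Θ) : ‖a - b‖ ≤ 2 * R := by
    linarith [norm_sub_le a b, hR a ha, hR b hb]
  have R_nonneg : 0 ≤ R := (norm_nonneg θ).trans (hR θ hθ)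
  calc ⟪gradient g θ, θ - u⟫
      ≤ ⟪gradient g θ, θ - v⟫ + ‖d - gradient g θ‖ * ‖u - v‖ :=
        inner_sub_le_inner_sub_add_of_inner_le (hvmin u hu) _ _
    _ ≤ (g θ - g (θ + η • (v - θ))) / η + L / 2 * η * ‖v - θ‖ ^ 2
          + ‖d - gradient g θ‖ * ‖u - v‖ := by
        gcongr
        exact inner_gradient_sub_le_div_add hη (fun z hz => (hg z hz).hasGradientAt) hlip
    _ ≤ (g θ - g (θ + η • (v - θ))) / η + L / 2 * η * (2 * R) ^ 2
          + ‖d - gradient g θ‖ * (2 * R) := by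
        gcongr
        exacts [norm_sub_le_two_mul hv hθ, norm_sub_le_two_mul hu hv]
    _ ≤ (g θ - g (θ + η • (v - θ))) / η + 2 * L * η * R ^ 2
          + 4 * R * ‖d - gradient g θ‖ := by
        linarith [mul_nonneg R_nonneg (norm_nonneg (d - gradient g θ))]

end InnerProductSpace

/-- one-step gap bound for the Frank–Wolfe method with an
inexact gradient direction `d`. -/
theorem stmt8 {n : ℕ} (Θ : Set (EuclideanSpace ℝ (Fin n)))
    (hΘne : Θ.Nonempty) (hΘcompact : IsCompact Θ) (hΘconvex : Convex ℝ Θ)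
    (R : ℝ) (hR : ∀ u ∈ Θ, ‖u‖ ≤ R)
    (g : EuclideanSpace ℝ (Fin n) → ℝ)
    (hdiff : Differentiable ℝ g)
    (L : ℝ) (hL : 0 ≤ L)
    (hlip : ∀ x y, ‖gradient g x - gradient g y‖ ≤ L * ‖x - y‖)
    (θ : EuclideanSpace ℝ (Fin n)) (hθ : θ ∈ Θ)
    (d : EuclideanSpace ℝ (Fin n))
    (η : ℝ) (hη0 : 0 < η) (hη1 : η ≤ 1)
    (vhat : EuclideanSpace ℝ (Fin n)) (hvhat : vhat ∈ Θ)
    (hvmin : ∀ u ∈ Θ, ⟪d, vhat⟫ ≤ ⟪d, u⟫)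
    (θplus : EuclideanSpace ℝ (Fin n)) (hθplus : θplus = θ + η • (vhat - θ)) :
    ∀ u ∈ Θ,
      ⟪gradient g θ, θ - u⟫ ≤
        (g θ - g θplus) / η + 2 * L * η * R ^ 2 + 4 * R * ‖d - gradient g θ‖ :=
  stmt8_general hR hL hθ hη0 hvhat hvmin hθplus (fun z _ => hdiff z) (fun z _ => hlip z θ)
end

section
/- Let Θ ⊆ ℝ^n be a nonempty closed convex set with ‖u‖ ≤ R for all u ∈ Θ, and let g : ℝ^n → ℝ be differentiable. Let θ ∈ Θ, G ≥ ‖∇g(θ)‖, η > 0, d ∈ ℝ^n, and let θ⁺ ∈ Θ be the metric projection of θ − ηd onto Θ. Then for every u ∈ Θ: ⟨∇g(θ), θ − u⟩ ≤ (2R/η + G)·‖θ − θ⁺‖ + 2R·‖d − ∇g(θ)‖. -/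
open RealInnerProductSpace

/-!
With `v = ∇g(θ)`, split `⟪v, θ - u⟫ = ⟪v, θ - θ⁺⟫ + ⟪v - d, θ⁺ - u⟫ + ⟪d, θ⁺ - u⟫`.
Cauchy–Schwarz bounds the first two terms. For the third, the variational
inequality of the projection compares the linear model with the step itself,
`η ⟪d, θ⁺ - u⟫ ≤ ⟪θ - θ⁺, θ⁺ - u⟫`, and Cauchy–Schwarz applies again.
-/

section ProjectedStep

variable {E : Type*} [NormedAddCommGroup E] [InnerProductSpace ℝ E]

theorem real_inner_le_mul_of_norm_le {x y : E} {a b : ℝ} (hx : ‖x‖ ≤ a) (hy : ‖y‖ ≤ b) :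
    ⟪x, y⟫ ≤ a * b :=
  (real_inner_le_norm x y).trans <|
    mul_le_mul hx hy (norm_nonneg y) ((norm_nonneg x).trans hx)

theorem real_inner_sub_smul_sub_nonpos_iff (θ d p u : E) (η : ℝ) :
    ⟪(θ - η • d) - p, u - p⟫ ≤ 0 ↔ η * ⟪d, p - u⟫ ≤ ⟪θ - p, p - u⟫ := by
  have expand : ⟪(θ - η • d) - p, u - p⟫ = η * ⟪d, p - u⟫ - ⟪θ - p, p - u⟫ := by
    simp only [inner_sub_left, inner_sub_right, real_inner_smul_left]
    ring
  rw [expand, sub_nonpos]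

theorem real_inner_le_div_mul_norm_of_projected_step {θ d p u : E} {η D : ℝ} (hη : 0 < η)
    (hD : ‖p - u‖ ≤ D) (hproj : ⟪(θ - η • d) - p, u - p⟫ ≤ 0) :
    ⟪d, p - u⟫ ≤ D / η * ‖θ - p‖ := by
  rw [div_mul_eq_mul_div, le_div_iff₀' hη]
  calc η * ⟪d, p - u⟫
      ≤ ⟪θ - p, p - u⟫ := (real_inner_sub_smul_sub_nonpos_iff θ d p u η).mp hproj
    _ ≤ ‖θ - p‖ * D := real_inner_le_mul_of_norm_le le_rfl hD
    _ = D * ‖θ - p‖ := mul_comm _ _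

theorem real_inner_sub_eq_add_add (v d θ p u : E) :
    ⟪v, θ - u⟫ = ⟪v, θ - p⟫ + ⟪v - d, p - u⟫ + ⟪d, p - u⟫ := by
  simp only [inner_sub_left, inner_sub_right]
  ring

theorem stmt9_general {Θ : Set E} {D : ℝ} (hΘ : ∀ x ∈ Θ, ∀ y ∈ Θ, ‖x - y‖ ≤ D)
    {v : E} {G : ℝ} (hG : ‖v‖ ≤ G) {η : ℝ} (hη : 0 < η) {θ d θplus : E} (hθplus : θplus ∈ Θ)
    (hproj : ∀ y ∈ Θ, ⟪(θ - η • d) - θplus, y - θplus⟫ ≤ 0) {u : E} (hu : u ∈ Θ) :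
    ⟪v, θ - u⟫ ≤ (D / η + G) * ‖θ - θplus‖ + D * ‖d - v‖ := by
  have hD : ‖θplus - u‖ ≤ D := hΘ θplus hθplus u hu
  have move : ⟪v, θ - θplus⟫ ≤ G * ‖θ - θplus‖ := real_inner_le_mul_of_norm_le hG le_rfl
  have error : ⟪v - d, θplus - u⟫ ≤ ‖d - v‖ * D :=
    real_inner_le_mul_of_norm_le (norm_sub_rev v d).le hD
  have model : ⟪d, θplus - u⟫ ≤ D / η * ‖θ - θplus‖ :=
    real_inner_le_div_mul_norm_of_projected_step hη hD (hproj u hu)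
  calc ⟪v, θ - u⟫
      = ⟪v, θ - θplus⟫ + ⟪v - d, θplus - u⟫ + ⟪d, θplus - u⟫ :=
        real_inner_sub_eq_add_add v d θ θplus u
    _ ≤ G * ‖θ - θplus‖ + ‖d - v‖ * D + D / η * ‖θ - θplus‖ := by gcongr
    _ = (D / η + G) * ‖θ - θplus‖ + D * ‖d - v‖ := by ring

end ProjectedStep

/-- the Frank–Wolfe-type gap of `g` at `θ` is bounded via one
inexact projected-gradient step with stepsize `η` and gradient estimate `d`. -/
theorem stmt9 {n : ℕ} (Θ : Set (EuclideanSpace ℝ (Fin n)))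
    (hΘne : Θ.Nonempty) (hΘclosed : IsClosed Θ) (hΘconvex : Convex ℝ Θ)
    (R : ℝ) (hR : ∀ u ∈ Θ, ‖u‖ ≤ R)
    (g : EuclideanSpace ℝ (Fin n) → ℝ)
    (hdiff : Differentiable ℝ g)
    (θ : EuclideanSpace ℝ (Fin n)) (hθ : θ ∈ Θ)
    (G : ℝ) (hG : ‖gradient g θ‖ ≤ G)
    (η : ℝ) (hη : 0 < η)
    (d : EuclideanSpace ℝ (Fin n))
    (θplus : EuclideanSpace ℝ (Fin n)) (hθplus : θplus ∈ Θ)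
    (hproj : ∀ y ∈ Θ, ⟪(θ - η • d) - θplus, y - θplus⟫ ≤ 0) :
    ∀ u ∈ Θ,
      ⟪gradient g θ, θ - u⟫ ≤
        (2 * R / η + G) * ‖θ - θplus‖ + 2 * R * ‖d - gradient g θ‖ :=
  fun _ hu ↦ stmt9_general
    (fun x hx y hy ↦ two_mul R ▸ norm_sub_le_of_le (hR x hx) (hR y hy)) hG hη hθplus hproj hu
end

section
/- Let Θ ⊆ ℝ^n be a nonempty closed convex set, and let g : ℝ^n → ℝ be differentiable with L-Lipschitz gradient, where L > 0. Let θ ∈ Θ, d ∈ ℝ^n, and let θ⁺ ∈ Θ be the metric projection of θ − (1/L)d onto Θ. Then ‖θ⁺ − θ‖² ≤ (4/L)·(g(θ) − g(θ⁺)) + (4/L²)·‖d − ∇g(θ)‖². -/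
open RealInnerProductSpace

/-! Testing the variational inequality of the projection at `θ` itself gives
`L * ‖s‖ ^ 2 ≤ -⟪d, s⟫` for the displacement `s = θ⁺ - θ`. Adding the descent lemma
`g θ⁺ ≤ g θ + ⟪∇ g θ, s⟫ + L / 2 * ‖s‖ ^ 2` leaves
`L / 2 * ‖s‖ ^ 2 ≤ g θ - g θ⁺ + ‖d - ∇ g θ‖ * ‖s‖`, and Young's inequality bounds the last product
by `L / 4 * ‖s‖ ^ 2 + ‖d - ∇ g θ‖ ^ 2 / L`, whose first term is half of the left-hand side. -/

theorem image_le_quadratic_of_deriv_right_le_affine {f f' : ℝ → ℝ} {a b m C : ℝ}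
    (hf : ContinuousOn f (Set.Icc a b))
    (hf' : ∀ t ∈ Set.Ico a b, HasDerivWithinAt f (f' t) (Set.Ici t) t)
    (bound : ∀ t ∈ Set.Ico a b, f' t ≤ m + C * (t - a)) ⦃t : ℝ⦄ (ht : t ∈ Set.Icc a b) :
    f t ≤ f a + m * (t - a) + C / 2 * (t - a) ^ 2 := by
  have hquad (t : ℝ) : HasDerivAt (fun t ↦ f a + m * (t - a) + C / 2 * (t - a) ^ 2)
      (m + C * (t - a)) t := by
    have hsub : HasDerivAt (fun t ↦ t - a) 1 t := (hasDerivAt_id t).sub_const a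
    refine (((hsub.const_mul m).const_add (f a)).add
      ((hsub.pow 2).const_mul (C / 2))).congr_deriv ?_
    push_cast
    ring
  exact image_le_of_deriv_right_le_deriv_boundary hf hf' (by simp)
    (fun t _ ↦ (hquad t).continuousAt.continuousWithinAt)
    (fun t _ ↦ (hquad t).hasDerivWithinAt) bound ht

theorem le_quadratic_of_norm_fderivWithin_sub_le {E : Type*} [NormedAddCommGroup E]
    [NormedSpace ℝ E] {s : Set E} {f : E → ℝ} {f' : E → StrongDual ℝ E} {L : ℝ} {x y : E}
    (hs : Convex ℝ s) (hf : ∀ z ∈ s, HasFDerivWithinAt f (f' z) s z)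
    (hlip : ∀ z ∈ s, ‖f' z - f' x‖ ≤ L * ‖z - x‖) (hx : x ∈ s) (hy : y ∈ s) :
    f y ≤ f x + f' x (y - x) + L / 2 * ‖y - x‖ ^ 2 := by
  let γ : ℝ → E := AffineMap.lineMap x y
  have hγ : Set.MapsTo γ (Set.Icc 0 1) s := fun t ht ↦ hs.lineMap_mem hx hy ht
  have hderiv (t : ℝ) (ht : t ∈ Set.Icc 0 1) :
      HasDerivWithinAt (f ∘ γ) (f' (γ t) (y - x)) (Set.Icc 0 1) t :=
    (hf (γ t) (hγ ht)).comp_hasDerivWithinAt t AffineMap.hasDerivWithinAt_lineMap hγ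
  have hbound (t : ℝ) (ht : t ∈ Set.Ico 0 1) :
      f' (γ t) (y - x) ≤ f' x (y - x) + L * ‖y - x‖ ^ 2 * (t - 0) := by
    have hdist : ‖γ t - x‖ = t * ‖y - x‖ := by
      simp [γ, AffineMap.lineMap_apply, norm_smul, abs_of_nonneg ht.1]
    rw [← sub_le_iff_le_add']
    calc f' (γ t) (y - x) - f' x (y - x) = (f' (γ t) - f' x) (y - x) := rfl
      _ ≤ ‖f' (γ t) - f' x‖ * ‖y - x‖ := (le_abs_self _).trans ((f' (γ t) - f' x).le_opNorm _)
      _ ≤ L * ‖γ t - x‖ * ‖y - x‖ := by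
        gcongr
        exact hlip (γ t) (hγ (Set.Ico_subset_Icc_self ht))
      _ = L * ‖y - x‖ ^ 2 * (t - 0) := by rw [hdist]; ring
  have hquad := image_le_quadratic_of_deriv_right_le_affine
    (fun t ht ↦ (hderiv t ht).continuousWithinAt)
    (fun t ht ↦ (hderiv t (Set.Ico_subset_Icc_self ht)).mono_of_mem_nhdsWithin
      (Icc_mem_nhdsGE_of_mem ht))
    hbound (Set.right_mem_Icc.2 zero_le_one)
  simpa [γ, mul_div_right_comm] using hquad

theorem norm_sub_sq_add_mul_inner_nonpos {E : Type*} [SeminormedAddCommGroup E]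
    [InnerProductSpace ℝ E] {x y d : E} {γ : ℝ} (h : ⟪x - γ • d - y, x - y⟫ ≤ 0) :
    ‖y - x‖ ^ 2 + γ * ⟪d, y - x⟫ ≤ 0 := by
  calc ‖y - x‖ ^ 2 + γ * ⟪d, y - x⟫ = ⟪(y - x) + γ • d, y - x⟫ := by
        rw [inner_add_left, real_inner_smul_left, real_inner_self_eq_norm_sq]
    _ = ⟪x - γ • d - y, x - y⟫ := by
        rw [← inner_neg_neg]
        congr 1 <;> abel
    _ ≤ 0 := h

theorem sq_le_of_half_mul_sq_le_add_mul {L r δ ε : ℝ} (hL : 0 < L)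
    (h : L / 2 * r ^ 2 ≤ δ + ε * r) : r ^ 2 ≤ 4 / L * δ + 4 / L ^ 2 * ε ^ 2 := by
  have young : ε * r ≤ L / 4 * r ^ 2 + ε ^ 2 / L := by
    have hsq : L / 4 * r ^ 2 + ε ^ 2 / L - ε * r = (L * r - 2 * ε) ^ 2 / (4 * L) := by
      field_simp
      ring
    rw [← sub_nonneg, hsq]
    positivity
  calc r ^ 2 = 4 / L * (L / 4 * r ^ 2) := by field_simp
    _ ≤ 4 / L * (δ + ε ^ 2 / L) := by
      gcongr
      linarith
    _ = 4 / L * δ + 4 / L ^ 2 * ε ^ 2 := by ring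

theorem stmt10_general {E : Type*} [NormedAddCommGroup E] [InnerProductSpace ℝ E]
    {s : Set E} {g : E → ℝ} {g' : E → StrongDual ℝ E} {L : ℝ} {θ θplus d : E}
    (hs : Convex ℝ s) (hg : ∀ z ∈ s, HasFDerivWithinAt g (g' z) s z) (hL : 0 < L)
    (hlip : ∀ z ∈ s, ‖g' z - g' θ‖ ≤ L * ‖z - θ‖) (hθ : θ ∈ s) (hθplus : θplus ∈ s)
    (hproj : ⟪θ - (1 / L) • d - θplus, θ - θplus⟫ ≤ 0) :
    ‖θplus - θ‖ ^ 2 ≤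
      4 / L * (g θ - g θplus) + 4 / L ^ 2 * ‖innerSL ℝ d - g' θ‖ ^ 2 := by
  have hdescent : g θplus ≤ g θ + g' θ (θplus - θ) + L / 2 * ‖θplus - θ‖ ^ 2 :=
    le_quadratic_of_norm_fderivWithin_sub_le hs hg hlip hθ hθplus
  have hstep : L * ‖θplus - θ‖ ^ 2 + ⟪d, θplus - θ⟫ ≤ 0 := by
    have h := mul_nonpos_of_nonneg_of_nonpos hL.le (norm_sub_sq_add_mul_inner_nonpos hproj)
    rwa [mul_add, ← mul_assoc L (1 / L), mul_one_div_cancel hL.ne', one_mul] at h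
  have herror : g' θ (θplus - θ) - ⟪d, θplus - θ⟫ ≤ ‖innerSL ℝ d - g' θ‖ * ‖θplus - θ‖ := by
    rw [norm_sub_rev]
    exact (le_abs_self _).trans ((g' θ - innerSL ℝ d).le_opNorm _)
  exact sq_le_of_half_mul_sq_le_add_mul hL (by linarith)

/-- descent-type bound on the displacement of one inexact
projected gradient step with stepsize `1/L` on an `L`-smooth function. -/
theorem stmt10 {n : ℕ} (Θ : Set (EuclideanSpace ℝ (Fin n)))
    (hΘne : Θ.Nonempty) (hΘclosed : IsClosed Θ) (hΘconvex : Convex ℝ Θ)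
    (g : EuclideanSpace ℝ (Fin n) → ℝ)
    (hdiff : Differentiable ℝ g)
    (L : ℝ) (hL : 0 < L)
    (hlip : ∀ x y, ‖gradient g x - gradient g y‖ ≤ L * ‖x - y‖)
    (θ : EuclideanSpace ℝ (Fin n)) (hθ : θ ∈ Θ)
    (d : EuclideanSpace ℝ (Fin n))
    (θplus : EuclideanSpace ℝ (Fin n)) (hθplus : θplus ∈ Θ)
    (hproj : ∀ y ∈ Θ, ⟪(θ - (1 / L) • d) - θplus, y - θplus⟫ ≤ 0) :
    ‖θplus - θ‖ ^ 2 ≤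
      (4 / L) * (g θ - g θplus) + (4 / L ^ 2) * ‖d - gradient g θ‖ ^ 2 := by
  simpa only [← map_sub, innerSL_apply_norm] using
    stmt10_general (g' := fun z ↦ innerSL ℝ (gradient g z)) (d := d)
      convex_univ (fun z _ ↦ (hdiff z).hasGradientAt.hasFDerivAt.hasFDerivWithinAt) hL
      (fun z _ ↦ by simpa only [← map_sub, innerSL_apply_norm] using hlip z θ)
      (Set.mem_univ θ) (Set.mem_univ θplus) (hproj θ hθ)
end

section
/- Let n ≥ 1 and let Δ_n = {p ∈ ℝ^n : p_i ≥ 0 for all i, Σ_i p_i = 1}. Let η > 0, q ∈ ℝ^n, and p₀ ∈ Δ_n with p₀,ᵢ > 0 for all i. Let p⁺ ∈ Δ_n be a minimizer over Δ_n of π ↦ ⟨q, π⟩ + (1/η)·KL(π‖p₀), and assume p⁺ᵢ > 0 for all i. Then for every p* ∈ Δ_n: 0 ≤ η·⟨q, p* − p₀⟩ + (η²/2)·(max_i |q_i|)² + KL(p*‖p₀) − KL(p*‖p⁺). -/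
/-- Kullback–Leibler divergence between finitely supported probability
vectors, with the convention `0 · log 0 = 0` (note `Real.log 0 = 0`). -/
noncomputable def KLdiv {n : ℕ} (p q : Fin n → ℝ) : ℝ :=
  ∑ i, p i * Real.log (p i / q i)

/-! By the Gibbs variational principle the minimizer of the regularized cost is the exponentially
tilted distribution `p⁺ ∝ p₀ exp (-η q)`, because up to a constant the objective is
`KL(· ‖ p⁺) / η`. The difference `KL(p* ‖ p₀) - KL(p* ‖ p⁺)` is then the explicit expression
`-η ⟨q, p*⟩ - log Z`, and Hoeffding's lemma bounds the log-partition function `log Z` by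
`-η ⟨q, p₀⟩ + η² (max |q|)² / 2`. -/

open InformationTheory MeasureTheory ProbabilityTheory

section Tilt

variable {ι : Type*} [Fintype ι]

/-- The log-partition function `log ∑ i, p i * exp (x i)` of the weights `p` tilted by `x`; for a
probability vector `p` it is the cumulant generating function of `x` at `1`. -/
noncomputable def logPartition (p x : ι → ℝ) : ℝ :=
  Real.log (∑ i, p i * Real.exp (x i))

/-- The exponential tilt (Gibbs distribution) of the weights `p` by `x`, with density proportional
to `exp x`. The normalization is put into the exponent, so that its logarithm needs no division. -/
noncomputable def tilt (p x : ι → ℝ) (i : ι) : ℝ :=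
  p i * Real.exp (x i - logPartition p x)

lemma sum_mul_exp_pos {p : ι → ℝ} (hp : p ∈ stdSimplex ℝ ι) (x : ι → ℝ) :
    0 < ∑ i, p i * Real.exp (x i) := by
  obtain ⟨i, -, hi⟩ : ∃ i ∈ Finset.univ, 0 < p i :=
    Finset.exists_lt_of_sum_lt (by simp [hp.2])
  exact Finset.sum_pos' (fun j _ ↦ mul_nonneg (hp.1 j) (Real.exp_pos _).le)
    ⟨i, Finset.mem_univ i, mul_pos hi (Real.exp_pos _)⟩

lemma tilt_pos {p : ι → ℝ} (hp : ∀ i, 0 < p i) (x : ι → ℝ) (i : ι) : 0 < tilt p x i :=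
  mul_pos (hp i) (Real.exp_pos _)

lemma tilt_mem_stdSimplex {p : ι → ℝ} (hp : p ∈ stdSimplex ℝ ι) (x : ι → ℝ) :
    tilt p x ∈ stdSimplex ℝ ι := by
  refine ⟨fun i ↦ mul_nonneg (hp.1 i) (Real.exp_pos _).le, ?_⟩
  have hZ := sum_mul_exp_pos hp x
  simp only [tilt, logPartition, Real.exp_sub, Real.exp_log hZ, ← mul_div_assoc,
    ← Finset.sum_div, div_self hZ.ne']

lemma exists_pmf_integral_eq_dotProduct [MeasurableSpace ι] [MeasurableSingletonClass ι]
    {p : ι → ℝ} (hp : p ∈ stdSimplex ℝ ι) :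
    ∃ P : PMF ι, ∀ f : ι → ℝ, ∫ i, f i ∂P.toMeasure = p ⬝ᵥ f := by
  have hsum : ∑ i, ENNReal.ofReal (p i) = 1 := by
    rw [← ENNReal.ofReal_sum_of_nonneg fun i _ ↦ hp.1 i, hp.2, ENNReal.ofReal_one]
  refine ⟨PMF.ofFintype (fun i ↦ ENNReal.ofReal (p i)) hsum, fun f ↦ ?_⟩
  simp [PMF.integral_eq_sum, hp.1, dotProduct]

lemma logPartition_le_of_mem_Icc {p x : ι → ℝ} (hp : p ∈ stdSimplex ℝ ι) {a b : ℝ}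
    (hx : ∀ i, x i ∈ Set.Icc a b) :
    logPartition p x ≤ x ⬝ᵥ p + (b - a) ^ 2 / 8 := by
  let _ : MeasurableSpace ι := ⊤
  obtain ⟨P, hP⟩ := exists_pmf_integral_eq_dotProduct hp
  have hoeffding : p ⬝ᵥ (fun i ↦ Real.exp (x i - p ⬝ᵥ x)) ≤ Real.exp ((b - a) ^ 2 / 8) := by
    have h := (hasSubgaussianMGF_of_mem_Icc (measurable_of_finite x).aemeasurable
      (.of_forall hx : ∀ᵐ i ∂P.toMeasure, x i ∈ Set.Icc a b)).mgf_le 1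
    simp only [mgf, hP, one_mul] at h
    refine h.trans_eq (congrArg Real.exp ?_)
    push_cast
    rw [Real.norm_eq_abs, div_pow, sq_abs]
    ring
  rw [logPartition, Real.log_le_iff_le_exp (sum_mul_exp_pos hp x), dotProduct_comm x p]
  calc ∑ i, p i * Real.exp (x i)
      = Real.exp (p ⬝ᵥ x) * p ⬝ᵥ (fun i ↦ Real.exp (x i - p ⬝ᵥ x)) := by
        simp only [dotProduct, Finset.mul_sum, mul_left_comm (Real.exp _), ← Real.exp_add,
          add_sub_cancel]
    _ ≤ Real.exp (p ⬝ᵥ x) * Real.exp ((b - a) ^ 2 / 8) :=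
        mul_le_mul_of_nonneg_left hoeffding (Real.exp_pos _).le
    _ = Real.exp (p ⬝ᵥ x + (b - a) ^ 2 / 8) := (Real.exp_add _ _).symm

end Tilt

section KLdiv

variable {n : ℕ}

lemma KLdiv_self (p : Fin n → ℝ) : KLdiv p p = 0 :=
  Finset.sum_eq_zero fun i _ ↦ by rcases eq_or_ne (p i) 0 with h | h <;> simp [h]

lemma KLdiv_eq_sum_klFun {p r : Fin n → ℝ} (hr : ∀ i, r i ≠ 0) (hsum : ∑ i, p i = ∑ i, r i) :
    KLdiv p r = ∑ i, r i * klFun (p i / r i) := by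
  have hterm (i : Fin n) :
      r i * klFun (p i / r i) = p i * Real.log (p i / r i) + (r i - p i) := by
    have := hr i
    rw [klFun_apply]
    field_simp
    ring
  simp only [hterm, Finset.sum_add_distrib, Finset.sum_sub_distrib, hsum, sub_self, add_zero,
    KLdiv]

lemma eq_of_KLdiv_nonpos {p r : Fin n → ℝ} (hp : ∀ i, 0 ≤ p i) (hr : ∀ i, 0 < r i)
    (hsum : ∑ i, p i = ∑ i, r i) (h : KLdiv p r ≤ 0) : p = r := by
  have hratio (i : Fin n) : 0 ≤ p i / r i := div_nonneg (hp i) (hr i).le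
  have hterm (i : Fin n) : 0 ≤ r i * klFun (p i / r i) :=
    mul_nonneg (hr i).le (klFun_nonneg (hratio i))
  rw [KLdiv_eq_sum_klFun (fun i ↦ (hr i).ne') hsum] at h
  have hzero := (Finset.sum_eq_zero_iff_of_nonneg fun i _ ↦ hterm i).mp
    (h.antisymm (Finset.sum_nonneg fun i _ ↦ hterm i))
  funext i
  have hkl : klFun (p i / r i) = 0 :=
    (mul_eq_zero.mp (hzero i (Finset.mem_univ i))).resolve_left (hr i).ne'
  exact (div_eq_one_iff_eq (hr i).ne').mp ((klFun_eq_zero_iff (hratio i)).mp hkl)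

lemma KLdiv_sub_KLdiv_tilt {p π : Fin n → ℝ} (hp : ∀ i, p i ≠ 0) (hπ : ∑ i, π i = 1)
    (x : Fin n → ℝ) :
    KLdiv π p - KLdiv π (tilt p x) = x ⬝ᵥ π - logPartition p x := by
  have hterm (i : Fin n) :
      π i * Real.log (π i / p i) - π i * Real.log (π i / tilt p x i) =
        x i * π i - π i * logPartition p x := by
    rcases eq_or_ne (π i) 0 with h | h
    · simp [h]
    · rw [tilt, ← div_div, Real.log_div (div_ne_zero h (hp i)) (Real.exp_pos _).ne', Real.log_exp]
      ring
  simp only [KLdiv, ← Finset.sum_sub_distrib, hterm]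
  rw [Finset.sum_sub_distrib, ← Finset.sum_mul, hπ, one_mul, dotProduct]

lemma eq_tilt_of_isMinOn {p pmin x : Fin n → ℝ} (hp : p ∈ stdSimplex ℝ (Fin n))
    (hpos : ∀ i, 0 < p i) (hpmin : pmin ∈ stdSimplex ℝ (Fin n))
    (hmin : IsMinOn (fun π ↦ KLdiv π p - x ⬝ᵥ π) (stdSimplex ℝ (Fin n)) pmin) :
    pmin = tilt p x := by
  have htilt := tilt_mem_stdSimplex hp x
  have hp0 (i : Fin n) : p i ≠ 0 := (hpos i).ne'
  refine eq_of_KLdiv_nonpos hpmin.1 (tilt_pos hpos x) (hpmin.2.trans htilt.2.symm) ?_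
  have hle : KLdiv pmin p - x ⬝ᵥ pmin ≤ KLdiv (tilt p x) p - x ⬝ᵥ tilt p x := hmin htilt
  linarith [KLdiv_sub_KLdiv_tilt hp0 hpmin.2 x, KLdiv_sub_KLdiv_tilt hp0 htilt.2 x,
    KLdiv_self (tilt p x)]

lemma KLdiv_tilt_le {p π x : Fin n → ℝ} (hp : p ∈ stdSimplex ℝ (Fin n)) (hpos : ∀ i, 0 < p i)
    (hπ : ∑ i, π i = 1) {a b : ℝ} (hx : ∀ i, x i ∈ Set.Icc a b) :
    KLdiv π (tilt p x) ≤ KLdiv π p - x ⬝ᵥ (π - p) + (b - a) ^ 2 / 8 := by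
  rw [dotProduct_sub]
  linarith [KLdiv_sub_KLdiv_tilt (fun i ↦ (hpos i).ne') hπ x, logPartition_le_of_mem_Icc hp hx]

end KLdiv

/-- fundamental inequality for one mirror-descent (TRPO) step
on the simplex with cost vector `q` and stepsize `η`. -/
theorem stmt11 {n : ℕ} (hn : 1 ≤ n)
    (η : ℝ) (hη : 0 < η) (qv : Fin n → ℝ)
    (p₀ : Fin n → ℝ) (hp₀ : p₀ ∈ stdSimplex ℝ (Fin n)) (hp₀pos : ∀ i, 0 < p₀ i)
    (pplus : Fin n → ℝ) (hpplus : pplus ∈ stdSimplex ℝ (Fin n))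
    (hpplus_min : ∀ π ∈ stdSimplex ℝ (Fin n),
      (∑ i, qv i * pplus i) + (1 / η) * KLdiv pplus p₀ ≤
        (∑ i, qv i * π i) + (1 / η) * KLdiv π p₀)
    (hpplus_pos : ∀ i, 0 < pplus i) :
    ∀ ps ∈ stdSimplex ℝ (Fin n),
      0 ≤ η * (∑ i, qv i * (ps i - p₀ i)) + (η ^ 2 / 2) * (⨆ i, |qv i|) ^ 2 +
          KLdiv ps p₀ - KLdiv ps pplus := by
  intro ps hps
  have hmin : IsMinOn (fun π ↦ KLdiv π p₀ - (-η • qv) ⬝ᵥ π) (stdSimplex ℝ (Fin n)) pplus := by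
    intro π hπ
    have h := mul_le_mul_of_nonneg_left (hpplus_min π hπ) hη.le
    simp only [mul_add, ← mul_assoc, mul_one_div_cancel hη.ne', one_mul] at h
    change KLdiv pplus p₀ - (-η • qv) ⬝ᵥ pplus ≤ KLdiv π p₀ - (-η • qv) ⬝ᵥ π
    rw [smul_dotProduct, smul_dotProduct, smul_eq_mul, smul_eq_mul, dotProduct, dotProduct]
    linarith
  have hbound (i : Fin n) :
      (-η • qv) i ∈ Set.Icc (-(η * ⨆ i, |qv i|)) (η * ⨆ i, |qv i|) := by
    rw [Set.mem_Icc, ← abs_le, Pi.smul_apply, smul_eq_mul, abs_mul, abs_neg, abs_of_pos hη]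
    exact mul_le_mul_of_nonneg_left
      (le_ciSup (f := fun i ↦ |qv i|) (Set.finite_range _).bddAbove i) hη.le
  have hstep := KLdiv_tilt_le hp₀ hp₀pos hps.2 hbound
  rw [← eq_tilt_of_isMinOn hp₀ hp₀pos hpplus hmin, smul_dotProduct, smul_eq_mul] at hstep
  simp only [dotProduct, Pi.sub_apply] at hstep
  linarith
end
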